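/- arXiv:1304.1908 — 2 statements merged into one kernel-verified Lean document; each statement's English description precedes it below -/
import Mathlib

section
/- Let N ≥ 2 and 1 ≤ m < N-2 be integers, 0 < a < b reals, and p ≥ 2(N-m)/(N-m-2). If u ∈ C²(Ω) ∩ C¹(Ω̄) satisfies -Δu = |u|^{p-2}u in Ω, u = 0 on ∂Ω, and |∇u|², |u|^p ∈ L¹(Ω), then u ≡ 0 on Ω. -/
open MeasureTheory Set

noncomputable section

/-- `ℝ^k` as a Euclidean space. -/
abbrev E (k : ℕ) : Type := EuclideanSpace ℝ (Fin k)

/-- The cylindrical shell `Ω = {(y,z) : a < |y| < b}` in `ℝ^{m+1} × ℝ^{N-m-1}`. -/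
def Omega (N m : ℕ) (a b : ℝ) : Set (E (m + 1) × E (N - m - 1)) :=
  {x | a < ‖x.1‖ ∧ ‖x.1‖ < b}

/-- Second directional derivative of `u` at `x` in direction `v`. -/
def dd2 {V : Type} [NormedAddCommGroup V] [NormedSpace ℝ V] (u : V → ℝ) (x v : V) : ℝ :=
  fderiv ℝ (fun y => fderiv ℝ u y v) x v

/-- The Euclidean Laplacian (sum of second partial derivatives) on `ℝ^{m+1} × ℝ^{N-m-1}`. -/
def lap (N m : ℕ) (u : E (m + 1) × E (N - m - 1) → ℝ) (x : E (m + 1) × E (N - m - 1)) : ℝ :=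
  (∑ i : Fin (m + 1), dd2 u x (EuclideanSpace.single i 1, 0)) +
  (∑ j : Fin (N - m - 1), dd2 u x (0, EuclideanSpace.single j 1))

/-- `|∇u|²`, the squared Euclidean norm of the gradient of `u`. -/
def gradSq (N m : ℕ) (u : E (m + 1) × E (N - m - 1) → ℝ) (x : E (m + 1) × E (N - m - 1)) : ℝ :=
  (∑ i : Fin (m + 1), (fderiv ℝ u x (EuclideanSpace.single i 1, 0)) ^ 2) +
  (∑ j : Fin (N - m - 1), (fderiv ℝ u x (0, EuclideanSpace.single j 1)) ^ 2)


namespace Poh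

open Filter Topology

/-- Standard basis of the product. -/
def bas {n k : ℕ} : Fin n ⊕ Fin k → E n × E k :=
  Sum.elim (fun i => (EuclideanSpace.single i 1, 0)) (fun j => (0, EuclideanSpace.single j 1))

/-- Standard coordinates of the product. -/
def co {n k : ℕ} (i : Fin n ⊕ Fin k) (x : E n × E k) : ℝ :=
  Sum.elim (fun i => x.1 i) (fun j => x.2 j) i

/-- `f` is differentiable at `x` with partial derivatives `d`. -/
structure HP {n k : ℕ} (f : E n × E k → ℝ) (d : Fin n ⊕ Fin k → ℝ) (x : E n × E k) : Prop where
  diff : DifferentiableAt ℝ f x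
  eq : ∀ i, fderiv ℝ f x (bas i) = d i

section HPlemmas
variable {n k : ℕ} {f g : E n × E k → ℝ} {d e : Fin n ⊕ Fin k → ℝ} {x : E n × E k}

lemma HP.congr (h : HP f d x) (hde : ∀ i, d i = e i) : HP f e x :=
  ⟨h.diff, fun i => (h.eq i).trans (hde i)⟩

lemma HP.mul (hf : HP f d x) (hg : HP g e x) :
    HP (fun y => f y * g y) (fun i => d i * g x + f x * e i) x := by
  refine ⟨hf.diff.mul hg.diff, fun i => ?_⟩
  rw [fderiv_fun_mul hf.diff hg.diff, ← hf.eq, ← hg.eq]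
  simp [mul_comm]; ring

lemma HP.add (hf : HP f d x) (hg : HP g e x) :
    HP (fun y => f y + g y) (fun i => d i + e i) x := by
  refine ⟨hf.diff.add hg.diff, fun i => ?_⟩
  rw [fderiv_fun_add hf.diff hg.diff, ← hf.eq, ← hg.eq]
  simp

lemma HP.sub (hf : HP f d x) (hg : HP g e x) :
    HP (fun y => f y - g y) (fun i => d i - e i) x := by
  refine ⟨hf.diff.sub hg.diff, fun i => ?_⟩
  rw [fderiv_fun_sub hf.diff hg.diff, ← hf.eq, ← hg.eq]
  simp

lemma HP.const (c : ℝ) : HP (fun _ : E n × E k => c) (fun _ => 0) x :=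
  ⟨by fun_prop, fun i => by simp⟩

lemma HP.sum {ι : Type*} (s : Finset ι) {F : ι → E n × E k → ℝ} {D : ι → Fin n ⊕ Fin k → ℝ}
    (h : ∀ j ∈ s, HP (F j) (D j) x) :
    HP (fun y => ∑ j ∈ s, F j y) (fun i => ∑ j ∈ s, D j i) x := by
  refine ⟨DifferentiableAt.fun_sum fun j hj => (h j hj).diff, fun i => ?_⟩
  rw [fderiv_fun_sum fun j hj => (h j hj).diff]
  simp only [_root_.sum_apply]
  exact Finset.sum_congr rfl fun j hj => (h j hj).eq i

lemma HP.comp {φ : ℝ → ℝ} {φ' : ℝ} (hf : HP f d x) (hφ : HasDerivAt φ φ' (f x)) :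
    HP (fun y => φ (f y)) (fun i => φ' * d i) x := by
  have h := hφ.comp_hasFDerivAt x hf.diff.hasFDerivAt
  refine ⟨h.differentiableAt, fun i => ?_⟩
  have h2 : fderiv ℝ (fun y => φ (f y)) x = φ' • fderiv ℝ f x := h.fderiv
  rw [h2, ← hf.eq]; simp

lemma contDiff_co {r : WithTop ℕ∞} (j : Fin n ⊕ Fin k) : ContDiff ℝ r (co j : E n × E k → ℝ) := by
  rcases j with j | j
  · exact ((EuclideanSpace.proj j : E n →L[ℝ] ℝ).comp
      (ContinuousLinearMap.fst ℝ (E n) (E k))).contDiff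
  · exact ((EuclideanSpace.proj j : E k →L[ℝ] ℝ).comp
      (ContinuousLinearMap.snd ℝ (E n) (E k))).contDiff

lemma HP.co (j : Fin n ⊕ Fin k) : HP (co j) (fun i => if i = j then 1 else 0) x := by
  refine ⟨(contDiff_co (r := 1) j).differentiable (by simp) x, fun i => ?_⟩
  rcases j with j | j
  · have : HasFDerivAt (Poh.co (Sum.inl j) : E n × E k → ℝ)
      ((EuclideanSpace.proj j : E n →L[ℝ] ℝ).comp (ContinuousLinearMap.fst ℝ (E n) (E k))) x :=
      ((EuclideanSpace.proj j : E n →L[ℝ] ℝ).comp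
        (ContinuousLinearMap.fst ℝ (E n) (E k))).hasFDerivAt
    rw [this.fderiv]
    rcases i with i | i
    · simp [bas, eq_comm]
    · simp [bas]
  · have : HasFDerivAt (Poh.co (Sum.inr j) : E n × E k → ℝ)
      ((EuclideanSpace.proj j : E k →L[ℝ] ℝ).comp (ContinuousLinearMap.snd ℝ (E n) (E k))) x :=
      ((EuclideanSpace.proj j : E k →L[ℝ] ℝ).comp
        (ContinuousLinearMap.snd ℝ (E n) (E k))).hasFDerivAt
    rw [this.fderiv]
    rcases i with i | i
    · simp [bas]
    · simp [bas, eq_comm]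

/-- derivative of `‖y‖²` -/
lemma HP.normSq1 : HP (fun x : E n × E k => ‖x.1‖ ^ 2)
    (Sum.elim (fun i => 2 * x.1 i) (fun _ => 0)) x := by
  have h : (fun x : E n × E k => ‖x.1‖ ^ 2) =
      fun x => ∑ j : Fin n, Poh.co (Sum.inl j) x * Poh.co (Sum.inl j) x := by
    funext x; rw [EuclideanSpace.real_norm_sq_eq]; simp [Poh.co, sq]
  rw [h]
  refine (HP.sum _ fun j _ => (HP.co _).mul (HP.co _)).congr fun i => ?_
  rcases i with i | i
  · simp [Finset.sum_add_distrib, Poh.co]; ring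
  · simp

lemma HP.normSq2 : HP (fun x : E n × E k => ‖x.2‖ ^ 2)
    (Sum.elim (fun _ => 0) (fun i => 2 * x.2 i)) x := by
  have h : (fun x : E n × E k => ‖x.2‖ ^ 2) =
      fun x => ∑ j : Fin k, Poh.co (Sum.inr j) x * Poh.co (Sum.inr j) x := by
    funext x; rw [EuclideanSpace.real_norm_sq_eq]; simp [Poh.co, sq]
  rw [h]
  refine (HP.sum _ fun j _ => (HP.co _).mul (HP.co _)).congr fun i => ?_
  rcases i with i | i
  · simp
  · simp [Finset.sum_add_distrib, Poh.co]; ring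

end HPlemmas

/-- A cutoff function. -/
lemma exists_chi : ∃ (χ χ' : ℝ → ℝ) (M : ℝ), ContDiff ℝ 1 χ ∧ (∀ t, HasDerivAt χ (χ' t) t) ∧
    Continuous χ' ∧ (∀ t, 0 ≤ χ t) ∧ (∀ t, χ t ≤ 1) ∧ (∀ t, t ≤ 1 → χ t = 0) ∧
    (∀ t, 2 ≤ t → χ t = 1) ∧ (∀ t, 0 ≤ χ' t) ∧ (∀ t, χ' t ≤ M) ∧
    (∀ t, t ≤ 1 → χ' t = 0) ∧ (∀ t, 2 ≤ t → χ' t = 0) ∧ 0 ≤ M := by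
  set χ : ℝ → ℝ := fun t => Real.smoothTransition (t - 1) with hχ
  have hC : ContDiff ℝ 1 χ := by
    have := Real.smoothTransition.contDiff (n := 1)
    exact this.comp (by fun_prop)
  have hd : ∀ t, HasDerivAt χ (deriv χ t) t := fun t =>
    (hC.differentiable (by simp) t).hasDerivAt
  have hcont : Continuous (deriv χ) := hC.continuous_deriv le_rfl
  have hmono : Monotone χ := fun s t h => Real.smoothTransition.monotone (by linarith)
  have h0 : ∀ t, t ≤ 1 → χ t = 0 := fun t ht => Real.smoothTransition.zero_of_nonpos (by linarith)
  have h1 : ∀ t, 2 ≤ t → χ t = 1 := fun t ht => Real.smoothTransition.one_of_one_le (by linarith)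
  have hn : ∀ t, 0 ≤ deriv χ t := fun t => hmono.deriv_nonneg
  have hz : ∀ t, t ≤ 1 → deriv χ t = 0 := by
    intro t ht
    have : IsLocalMin χ t := by
      filter_upwards with s
      rw [h0 t ht]; exact Real.smoothTransition.nonneg _
    exact this.deriv_eq_zero
  have hz2 : ∀ t, 2 ≤ t → deriv χ t = 0 := by
    intro t ht
    have : IsLocalMax χ t := by
      filter_upwards with s
      rw [h1 t ht]; exact Real.smoothTransition.le_one _
    exact this.deriv_eq_zero
  obtain ⟨M, hM⟩ := (isCompact_Icc (a := (1:ℝ)) (b := 2)).exists_bound_of_continuousOn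
    hcont.continuousOn
  have hM0 : 0 ≤ M := (norm_nonneg _).trans (hM 1 (by simp))
  refine ⟨χ, deriv χ, M, hC, hd, hcont, fun t => Real.smoothTransition.nonneg _,
    fun t => Real.smoothTransition.le_one _, h0, h1, hn, fun t => ?_, hz, hz2, hM0⟩
  by_cases h : t ∈ Icc (1:ℝ) 2
  · exact (le_abs_self _).trans (hM t h)
  · rw [mem_Icc, not_and_or, not_le, not_le] at h
    rcases h with h | h
    · rw [hz t h.le]; exact hM0
    · rw [hz2 t h.le]; exact hM0

/-- shell volume estimate -/
lemma shell_volume {n : ℕ} (B : ℝ) : ∃ C : ℝ, 0 ≤ C ∧ ∀ r₁ r₂ : ℝ, 0 < r₁ → r₁ ≤ r₂ →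
    r₂ ≤ B → volume.real {y : E n | r₁ ≤ ‖y‖ ∧ ‖y‖ ≤ r₂} ≤ C * (r₂ - r₁) := by
  set v := volume.real (Metric.ball (0 : E n) 1)
  have hv : 0 ≤ v := measureReal_nonneg
  refine ⟨n * |B| ^ (n - 1) * v, by positivity, fun r₁ r₂ h1 h12 h2 => ?_⟩
  have hs : {y : E n | r₁ ≤ ‖y‖ ∧ ‖y‖ ≤ r₂} = Metric.closedBall 0 r₂ \ Metric.ball 0 r₁ := by
    ext y; simp [and_comm]
  have hsub : Metric.ball (0 : E n) r₁ ⊆ Metric.closedBall 0 r₂ :=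
    Metric.ball_subset_closedBall.trans (Metric.closedBall_subset_closedBall h12)
  have hb : volume.real (Metric.ball (0 : E n) r₁) =
      r₁ ^ (Module.finrank ℝ (E n)) * volume.real (Metric.ball (0 : E n) 1) := by
    rw [Measure.real, Measure.addHaar_ball_of_pos _ _ h1, ENNReal.toReal_mul,
      ENNReal.toReal_ofReal (by positivity), Measure.real]
  rw [hs, measureReal_sdiff hsub measurableSet_ball (measure_closedBall_lt_top.ne),
    Measure.addHaar_real_closedBall _ _ (h1.le.trans h12), hb]
  simp only [finrank_euclideanSpace, Fintype.card_fin]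
  rw [← sub_mul]
  have h3 : r₂ ^ n - r₁ ^ n ≤ |r₂ - r₁| * n * max |r₂| |r₁| ^ (n - 1) :=
    (le_abs_self _).trans (abs_pow_sub_pow_le ..)
  have h4 : max |r₂| |r₁| ≤ |B| := by
    rw [abs_of_pos h1, abs_of_pos (h1.trans_le h12), max_eq_left h12]
    exact h2.trans (le_abs_self _)
  calc (r₂ ^ n - r₁ ^ n) * v ≤ (|r₂ - r₁| * n * |B| ^ (n - 1)) * v := by
        refine mul_le_mul_of_nonneg_right (h3.trans ?_) hv
        gcongr
    _ = _ := by rw [abs_of_nonneg (by linarith)]; ring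

/-- open shell -/
def Sh (n k : ℕ) (a b : ℝ) : Set (E n × E k) := {x | a < ‖x.1‖ ∧ ‖x.1‖ < b}

/-- closed shell -/
def Cl (n k : ℕ) (a b : ℝ) : Set (E n × E k) := {x | a ≤ ‖x.1‖ ∧ ‖x.1‖ ≤ b}

lemma isOpen_Sh {n k : ℕ} {a b : ℝ} : IsOpen (Sh n k a b) :=
  (isOpen_lt continuous_const continuous_fst.norm).inter
    (isOpen_lt continuous_fst.norm continuous_const)

lemma isClosed_Cl {n k : ℕ} {a b : ℝ} : IsClosed (Cl n k a b) :=
  (isClosed_le continuous_const continuous_fst.norm).inter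
    (isClosed_le continuous_fst.norm continuous_const)

lemma Sh_sub_Cl {n k : ℕ} {a b : ℝ} : Sh n k a b ⊆ Cl n k a b := fun _ h => ⟨h.1.le, h.2.le⟩

lemma isCompact_ClR {n k : ℕ} {a b R : ℝ} : IsCompact (Cl n k a b ∩ {x | ‖x.2‖ ≤ R}) := by
  refine ((isCompact_closedBall (0 : E n) b).prod (isCompact_closedBall (0 : E k) R)).of_isClosed_subset
    (isClosed_Cl.inter (isClosed_le continuous_snd.norm continuous_const)) ?_
  rintro x ⟨h1, h2⟩
  exact ⟨by simpa using h1.2, by simpa using h2⟩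

lemma integral_fderiv_zero {n k : ℕ} {w : E n × E k → ℝ} (hw : ContDiff ℝ 1 w)
    (hc : HasCompactSupport w) (v : E n × E k) :
    Integrable (fun x => fderiv ℝ w x v) ∧ ∫ x, fderiv ℝ w x v = 0 := by
  have h1 : Integrable (fun x => fderiv ℝ w x v) :=
    ((hw.continuous_fderiv (by simp)).clm_apply continuous_const).integrable_of_hasCompactSupport
      (hc.fderiv_apply (𝕜 := ℝ) v)
  refine ⟨h1, ?_⟩
  have h2 : Integrable w := hw.continuous.integrable_of_hasCompactSupport hc
  have : (volume : Measure (E n × E k)).IsAddHaarMeasure :=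
    Measure.prod.instIsAddHaarMeasure volume volume
  have := integral_mul_fderiv_eq_neg_fderiv_mul_of_integrable (μ := (volume : Measure (E n × E k)))
    (f := fun _ => (1:ℝ)) (g := w) (v := v) (by simp) (by simpa using h1) (by simpa using h2)
    (fun x _ => by fun_prop) (fun x _ => hw.differentiable (by simp) x)
  simpa using this

/-- One step of the divergence inequality. -/
lemma div_step {n k : ℕ} {a b R : ℝ} (ha : 0 < a) (hab : a < b)
    {χ χ' : ℝ → ℝ} {M : ℝ} (hC : ContDiff ℝ 1 χ) (hd : ∀ t, HasDerivAt χ (χ' t) t)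
    (hp : ∀ t, 0 ≤ χ t) (hl : ∀ t, χ t ≤ 1) (h0 : ∀ t, t ≤ 1 → χ t = 0)
    (hp' : ∀ t, 0 ≤ χ' t) (hM : ∀ t, χ' t ≤ M)
    (h2' : ∀ t, 2 ≤ t → χ' t = 0) (hM0 : 0 ≤ M)
    (W : Fin n ⊕ Fin k → E n × E k → ℝ)
    (hW : ∀ i, ContDiffOn ℝ 1 (W i) (Sh n k a b))
    (hsupp : ∀ i x, R ≤ ‖x.2‖ → W i x = 0)
    (D : E n × E k → ℝ)
    (hD : ∀ x ∈ Sh n k a b, ∑ i, fderiv ℝ (W i) x (bas i) = D x)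
    (hDint : IntegrableOn D (Sh n k a b)) {ε δ : ℝ} (hε : 0 < ε) (hδ : 0 ≤ δ)
    (hQb : ∀ x ∈ Cl n k a b, ‖x.2‖ ≤ R → b ^ 2 - 2 * ε ≤ ‖x.1‖ ^ 2 →
      -δ ≤ ∑ i, W (Sum.inl i) x * x.1 i)
    (hQa : ∀ x ∈ Cl n k a b, ‖x.2‖ ≤ R → ‖x.1‖ ^ 2 ≤ a ^ 2 + 2 * ε →
      ∑ i, W (Sum.inl i) x * x.1 i ≤ δ) :
    -(4 * M * δ / ε * volume.real ({x : E n × E k | ((a ≤ ‖x.1‖ ∧ ‖x.1‖ ≤ a + ε / a) ∨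
        (b - 2 * ε / b ≤ ‖x.1‖ ∧ ‖x.1‖ ≤ b)) ∧ ‖x.2‖ ≤ R})) ≤
      ∫ x in Sh n k a b, χ ((‖x.1‖ ^ 2 - a ^ 2) / ε) * χ ((b ^ 2 - ‖x.1‖ ^ 2) / ε) * D x := by
  have hb : 0 < b := ha.trans hab
  set T := {x : E n × E k | ((a ≤ ‖x.1‖ ∧ ‖x.1‖ ≤ a + ε / a) ∨
        (b - 2 * ε / b ≤ ‖x.1‖ ∧ ‖x.1‖ ≤ b)) ∧ ‖x.2‖ ≤ R} with hT
  set A : E n × E k → ℝ := fun x => (‖x.1‖ ^ 2 - a ^ 2) / ε with hA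
  set B : E n × E k → ℝ := fun x => (b ^ 2 - ‖x.1‖ ^ 2) / ε with hB
  set Q : E n × E k → ℝ := fun x => ∑ i, W (Sum.inl i) x * x.1 i with hQ
  set ζ : E n × E k → ℝ := fun x => χ (A x) * χ (B x) with hζ
  have hAc : ContDiff ℝ 1 A := (((contDiff_norm_sq ℝ).comp contDiff_fst).sub contDiff_const).div_const _
  have hBc : ContDiff ℝ 1 B := ((contDiff_const.sub ((contDiff_norm_sq ℝ).comp contDiff_fst))).div_const _
  have hζc : ContDiff ℝ 1 ζ := (hC.comp hAc).mul (hC.comp hBc)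
  -- zero near the complement of the shell
  have hζ0 : ∀ x, A x ≤ 1 ∨ B x ≤ 1 → ζ x = 0 := by
    intro x hx
    rcases hx with h | h <;> simp [hζ, h0 _ h]
  have hout : ∀ x, x ∉ Sh n k a b → ∀ᶠ y in 𝓝 x, ζ y = 0 := by
    intro x hx
    have hor : A x < 1 ∨ B x < 1 := by
      by_contra! hcon
      obtain ⟨h1, h2⟩ := hcon
      simp only [hA, hB] at h1 h2
      rw [le_div_iff₀ hε] at h1 h2
      exact hx ⟨lt_of_pow_lt_pow_left₀ 2 (norm_nonneg _) (by linarith),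
        lt_of_pow_lt_pow_left₀ 2 hb.le (by linarith)⟩
    rcases hor with h | h
    · filter_upwards [hAc.continuous.continuousAt.eventually_lt_const h] with y hy
      exact hζ0 y (Or.inl hy.le)
    · filter_upwards [hBc.continuous.continuousAt.eventually_lt_const h] with y hy
      exact hζ0 y (Or.inr hy.le)
  set w : Fin n ⊕ Fin k → E n × E k → ℝ := fun i x => ζ x * W i x with hw
  have hwC : ∀ i, ContDiff ℝ 1 (w i) := by
    intro i
    rw [contDiff_iff_contDiffAt]
    intro x
    by_cases hx : x ∈ Sh n k a b
    · exact hζc.contDiffAt.mul ((hW i).contDiffAt (isOpen_Sh.mem_nhds hx))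
    · have : w i =ᶠ[𝓝 x] fun _ => 0 := by
        filter_upwards [hout x hx] with y hy
        simp [hw, hy]
      exact contDiffAt_const.congr_of_eventuallyEq this
  have hwS : ∀ i, HasCompactSupport (w i) := by
    intro i
    refine HasCompactSupport.intro (isCompact_ClR (a := a) (b := b) (R := R)) ?_
    intro x hx
    by_cases hx2 : x ∈ Sh n k a b
    · have : R ≤ ‖x.2‖ := by
        by_contra! hc
        exact hx ⟨Sh_sub_Cl hx2, hc.le⟩
      simp [hw, hsupp i x this]
    · simp [hw, (hout x hx2).self_of_nhds]
  have hI0 : ∫ x, ∑ i, fderiv ℝ (w i) x (bas i) = 0 := by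
    rw [integral_finsetSum]
    · exact Finset.sum_eq_zero fun i _ => (integral_fderiv_zero (hwC i) (hwS i) _).2
    · exact fun i _ => (integral_fderiv_zero (hwC i) (hwS i) _).1
  have hI1 : Integrable fun x => ∑ i, fderiv ℝ (w i) x (bas i) :=
    integrable_finsetSum _ fun i _ => (integral_fderiv_zero (hwC i) (hwS i) _).1
  have hIn0 : ∀ x, x ∉ Sh n k a b → ∑ i, fderiv ℝ (w i) x (bas i) = 0 := by
    intro x hx
    refine Finset.sum_eq_zero fun i _ => ?_
    have : w i =ᶠ[𝓝 x] fun _ => 0 := by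
      filter_upwards [hout x hx] with y hy
      simp [hw, hy]
    rw [this.fderiv_eq]; simp
  have hI2 : ∫ x in Sh n k a b, ∑ i, fderiv ℝ (w i) x (bas i) = 0 := by
    rw [setIntegral_eq_integral_of_forall_compl_eq_zero hIn0, hI0]
  set P : E n × E k → ℝ := fun x => (2 / ε) * (χ' (A x) * χ (B x) * Q x - χ (A x) * χ' (B x) * Q x)
    with hP
  have hdiv : ∀ x ∈ Sh n k a b, ∑ i, fderiv ℝ (w i) x (bas i) = ζ x * D x + P x := by
    intro x hx
    have hAx : HP A (Sum.elim (fun i => 2 * x.1 i / ε) (fun _ => 0)) x := by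
      have h1 : A = fun x : E n × E k => (‖x.1‖ ^ 2 - a ^ 2) * ε⁻¹ := by
        funext x; simp [hA, div_eq_mul_inv]
      rw [h1]
      refine ((HP.normSq1.sub (HP.const _)).mul (HP.const _)).congr fun i => ?_
      rcases i with i | i <;> simp [div_eq_mul_inv]
    have hBx : HP B (Sum.elim (fun i => -(2 * x.1 i / ε)) (fun _ => 0)) x := by
      have h1 : B = fun x : E n × E k => (b ^ 2 - ‖x.1‖ ^ 2) * ε⁻¹ := by
        funext x; simp [hB, div_eq_mul_inv]
      rw [h1]
      refine (((HP.const _).sub HP.normSq1).mul (HP.const _)).congr fun i => ?_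
      rcases i with i | i <;> simp [div_eq_mul_inv]
    have hζx := (hAx.comp (hd (A x))).mul (hBx.comp (hd (B x)))
    have hWx : ∀ i, HP (W i) (fun j => fderiv ℝ (W i) x (bas j)) x := fun i =>
      ⟨((hW i).contDiffAt (isOpen_Sh.mem_nhds hx)).differentiableAt (by simp), fun _ => rfl⟩
    have hwx : ∀ i, fderiv ℝ (w i) x (bas i) = _ := fun i => (hζx.mul (hWx i)).eq i
    rw [Finset.sum_congr rfl fun i _ => hwx i, Finset.sum_add_distrib, ← Finset.mul_sum, hD x hx,
      add_comm]
    congr 1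
    rw [Fintype.sum_sum_type]
    simp only [Sum.elim_inl, Sum.elim_inr, mul_zero, zero_mul, add_zero, Finset.sum_const_zero, hP,
      hQ, Finset.mul_sum, ← Finset.sum_sub_distrib]
    refine Finset.sum_congr rfl fun i _ => ?_
    field_simp
    ring
  have hζD : IntegrableOn (fun x => ζ x * D x) (Sh n k a b) := by
    refine hDint.bdd_mul (c := 1) hζc.continuous.aestronglyMeasurable ?_
    filter_upwards with x
    rw [Real.norm_of_nonneg (mul_nonneg (hp _) (hp _))]
    exact mul_le_one₀ (hl _) (hp _) (hl _)
  have hPint : IntegrableOn P (Sh n k a b) := by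
    have := hI1.integrableOn (s := Sh n k a b)
    have h2 := this.sub hζD
    refine h2.congr_fun (fun x hx => ?_) isOpen_Sh.measurableSet
    simp only [Pi.sub_apply]; rw [hdiv x hx]; ring
  have hsum : ∫ x in Sh n k a b, ζ x * D x = - ∫ x in Sh n k a b, P x := by
    rw [setIntegral_congr_fun isOpen_Sh.measurableSet hdiv, integral_add hζD hPint] at hI2
    linarith
  have hTm : MeasurableSet T := by
    have h1 : Continuous fun x : E n × E k => ‖x.1‖ := continuous_fst.norm
    have h2 : Continuous fun x : E n × E k => ‖x.2‖ := continuous_snd.norm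
    have : IsClosed T := by
      refine IsClosed.inter (IsClosed.union ?_ ?_) (isClosed_le h2 continuous_const)
      · exact (isClosed_le continuous_const h1).inter (isClosed_le h1 continuous_const)
      · exact (isClosed_le continuous_const h1).inter (isClosed_le h1 continuous_const)
    exact this.measurableSet
  have hTfin : volume T < ⊤ := by
    refine lt_of_le_of_lt (measure_mono (?_ : T ⊆ Metric.closedBall (0 : E n) (a + ε / a + b) ×ˢ
      Metric.closedBall (0 : E k) R))
      ((isCompact_closedBall _ _).prod (isCompact_closedBall _ _)).measure_lt_top
    rintro x ⟨h1, h2⟩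
    have : 0 < ε / a := by positivity
    refine ⟨?_, by simpa using h2⟩
    simp only [Metric.mem_closedBall, dist_zero_right]
    rcases h1 with h1 | h1 <;> linarith [h1.2]
  have hPle : ∀ x ∈ Sh n k a b, P x ≤ T.indicator (fun _ => 4 * M * δ / ε) x := by
    intro x hx
    have hnn : 0 ≤ T.indicator (fun _ => 4 * M * δ / ε) x :=
      indicator_nonneg (fun _ _ => by positivity) x
    by_cases hR : ‖x.2‖ ≤ R
    swap
    · have : Q x = 0 := Finset.sum_eq_zero fun i _ => by rw [hsupp _ x (not_le.1 hR).le, zero_mul]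
      simp only [hP, this, mul_zero, sub_zero]; exact hnn
    have e1 : χ' (A x) * χ (B x) * Q x ≤ M * δ ∧ (x ∉ T → χ' (A x) = 0) := by
      by_cases h : 2 ≤ A x
      · rw [h2' _ h]; simp; positivity
      · have h3 : ‖x.1‖ ^ 2 < a ^ 2 + 2 * ε := by
          simp only [hA, not_le] at h; rw [div_lt_iff₀ hε] at h; linarith
        have hq := hQa x (Sh_sub_Cl hx) hR h3.le
        constructor
        · calc χ' (A x) * χ (B x) * Q x ≤ χ' (A x) * χ (B x) * δ :=
              mul_le_mul_of_nonneg_left hq (mul_nonneg (hp' _) (hp _))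
            _ ≤ (M * 1) * δ := by
              gcongr
              · exact hp _
              · exact hM _
              · exact hl _
            _ = _ := by ring
        · intro hxT
          exfalso
          refine hxT ⟨Or.inl ⟨hx.1.le, ?_⟩, hR⟩
          by_contra! hcc
          have h4 : ‖x.1‖ ^ 2 - a ^ 2 = (‖x.1‖ - a) * (‖x.1‖ + a) := by ring
          have h5 : (ε / a) * (2 * a) ≤ (‖x.1‖ - a) * (‖x.1‖ + a) := by
            apply mul_le_mul <;> first | positivity | linarith [hx.1]
          have h6 : (ε / a) * (2 * a) = 2 * ε := by field_simp
          linarith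
    have e2 : -(χ (A x) * χ' (B x) * Q x) ≤ M * δ ∧ (x ∉ T → χ' (B x) = 0) := by
      by_cases h : 2 ≤ B x
      · rw [h2' _ h]; simp; positivity
      · have h3 : b ^ 2 - 2 * ε < ‖x.1‖ ^ 2 := by
          simp only [hB, not_le] at h; rw [div_lt_iff₀ hε] at h; linarith
        have hq := hQb x (Sh_sub_Cl hx) hR h3.le
        constructor
        · calc -(χ (A x) * χ' (B x) * Q x) = χ (A x) * χ' (B x) * (-Q x) := by ring
            _ ≤ χ (A x) * χ' (B x) * δ :=
              mul_le_mul_of_nonneg_left (by linarith) (mul_nonneg (hp _) (hp' _))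
            _ ≤ (1 * M) * δ := by
              gcongr
              · exact hp' _
              · exact hl _
              · exact hM _
            _ = _ := by ring
        · intro hxT
          exfalso
          refine hxT ⟨Or.inr ⟨?_, hx.2.le⟩, hR⟩
          by_contra! hcc
          have h4 : b ^ 2 - ‖x.1‖ ^ 2 = (b - ‖x.1‖) * (b + ‖x.1‖) := by ring
          have h5 : (2 * ε / b) * b ≤ (b - ‖x.1‖) * (b + ‖x.1‖) := by
            apply mul_le_mul <;> first | positivity | linarith [norm_nonneg x.1, hx.2]
          have h6 : (2 * ε / b) * b = 2 * ε := by field_simp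
          linarith
    by_cases hxT : x ∈ T
    · rw [indicator_of_mem hxT]
      calc P x = (2 / ε) * (χ' (A x) * χ (B x) * Q x + -(χ (A x) * χ' (B x) * Q x)) := by
            simp only [hP]; ring
        _ ≤ (2 / ε) * (M * δ + M * δ) := 
            mul_le_mul_of_nonneg_left (add_le_add e1.1 e2.1) (by positivity)
        _ = _ := by ring
    · rw [indicator_of_notMem hxT]
      simp [hP, e1.2 hxT, e2.2 hxT]
  have hTi : Integrable (T.indicator (fun _ => 4 * M * δ / ε)) :=
    (integrable_indicator_iff hTm).2 (integrableOn_const hTfin.ne)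
  have hPI : ∫ x in Sh n k a b, P x ≤ 4 * M * δ / ε * volume.real T := by
    calc ∫ x in Sh n k a b, P x ≤ ∫ x in Sh n k a b, T.indicator (fun _ => 4 * M * δ / ε) x :=
          setIntegral_mono_on hPint hTi.integrableOn isOpen_Sh.measurableSet hPle
      _ ≤ ∫ x, T.indicator (fun _ => 4 * M * δ / ε) x := by
          refine setIntegral_le_integral hTi ?_
          filter_upwards with x
          exact indicator_nonneg (fun _ _ => by positivity) x
      _ = _ := by
          rw [integral_indicator hTm, setIntegral_const, smul_eq_mul, mul_comm]
  rw [hsum]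
  linarith

/-- The boundary layers have volume `O(ε)`. -/
lemma layer_volume {n k : ℕ} {a b R : ℝ} (ha : 0 < a) (hab : a < b) :
    ∃ C : ℝ, 0 ≤ C ∧ ∀ᶠ ε in 𝓝[>] (0:ℝ),
      volume.real ({x : E n × E k | ((a ≤ ‖x.1‖ ∧ ‖x.1‖ ≤ a + ε / a) ∨
        (b - 2 * ε / b ≤ ‖x.1‖ ∧ ‖x.1‖ ≤ b)) ∧ ‖x.2‖ ≤ R}) ≤ C * ε := by
  have hb : 0 < b := ha.trans hab
  obtain ⟨C, hC, hS⟩ := shell_volume (n := n) (a + 1 / a + b)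
  set v := volume.real (Metric.closedBall (0 : E k) R)
  have hv : 0 ≤ v := measureReal_nonneg
  refine ⟨(C / a + C * 2 / b) * v, by positivity, ?_⟩
  have h1 : ∀ᶠ ε in 𝓝[>] (0:ℝ), ε < 1 := nhdsWithin_le_nhds (gt_mem_nhds one_pos)
  have h2 : ∀ᶠ ε in 𝓝[>] (0:ℝ), ε < b ^ 2 / 2 := nhdsWithin_le_nhds (gt_mem_nhds (by positivity))
  filter_upwards [h1, h2, self_mem_nhdsWithin] with ε h1 h2 h3
  have h3 : 0 < ε := h3
  have h4 : 2 * ε / b < b := by rw [div_lt_iff₀ hb]; nlinarith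
  have h5 : ε / a ≤ 1 / a := by gcongr
  have h6 : 0 < ε / a := by positivity
  have h7 : 0 < 2 * ε / b := by positivity
  have s1 := hS a (a + ε / a) ha (by linarith) (by linarith)
  have s2 := hS (b - 2 * ε / b) b (by linarith) (by linarith)
    (by have : 0 < 1 / a := by positivity
        linarith)
  set S1 := {y : E n | a ≤ ‖y‖ ∧ ‖y‖ ≤ a + ε / a}
  set S2 := {y : E n | b - 2 * ε / b ≤ ‖y‖ ∧ ‖y‖ ≤ b}
  have hsub : {x : E n × E k | ((a ≤ ‖x.1‖ ∧ ‖x.1‖ ≤ a + ε / a) ∨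
        (b - 2 * ε / b ≤ ‖x.1‖ ∧ ‖x.1‖ ≤ b)) ∧ ‖x.2‖ ≤ R} ⊆
      (S1 ∪ S2) ×ˢ Metric.closedBall (0 : E k) R := by
    rintro x ⟨h1, h2⟩
    exact ⟨h1, by simpa using h2⟩
  have hfin1 : volume (S1 ∪ S2) < ⊤ := by
    refine lt_of_le_of_lt (measure_mono (?_ : _ ⊆ Metric.closedBall (0 : E n) (a + ε / a + b)))
      measure_closedBall_lt_top
    rintro y (h | h)
    · simp only [Metric.mem_closedBall, dist_zero_right]; linarith [h.2]
    · simp only [Metric.mem_closedBall, dist_zero_right]; linarith [h.2]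
  have hprod : volume.real ((S1 ∪ S2) ×ˢ Metric.closedBall (0 : E k) R) =
      volume.real (S1 ∪ S2) * v := measureReal_prod_prod _ _
  have hfin : volume ((S1 ∪ S2) ×ˢ Metric.closedBall (0 : E k) R) ≠ ⊤ := by
    rw [Measure.volume_eq_prod, Measure.prod_prod]
    exact (ENNReal.mul_lt_top hfin1 measure_closedBall_lt_top).ne
  calc _ ≤ volume.real ((S1 ∪ S2) ×ˢ Metric.closedBall (0 : E k) R) := measureReal_mono hsub hfin
    _ = volume.real (S1 ∪ S2) * v := hprod
    _ ≤ (C * (a + ε / a - a) + C * (b - (b - 2 * ε / b))) * v := by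
        refine mul_le_mul_of_nonneg_right ?_ hv
        exact (measureReal_union_le _ _).trans (add_le_add s1 s2)
    _ = _ := by ring

/-- Divergence inequality on the shell. -/
lemma div_nonneg' {n k : ℕ} {a b R : ℝ} (ha : 0 < a) (hab : a < b)
    (W : Fin n ⊕ Fin k → E n × E k → ℝ)
    (hW : ∀ i, ContDiffOn ℝ 1 (W i) (Sh n k a b))
    (hWc : ∀ i, ContinuousOn (W i) (Cl n k a b))
    (hsupp : ∀ i x, R ≤ ‖x.2‖ → W i x = 0)
    (hQb : ∀ x : E n × E k, ‖x.1‖ = b → 0 ≤ ∑ i, W (Sum.inl i) x * x.1 i)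
    (hQa : ∀ x : E n × E k, ‖x.1‖ = a → ∑ i, W (Sum.inl i) x * x.1 i ≤ 0)
    (D : E n × E k → ℝ)
    (hD : ∀ x ∈ Sh n k a b, ∑ i, fderiv ℝ (W i) x (bas i) = D x)
    (hDint : IntegrableOn D (Sh n k a b)) : 0 ≤ ∫ x in Sh n k a b, D x := by
  have hb : 0 < b := ha.trans hab
  obtain ⟨χ, χ', M, hC, hd, hcont, hp, hl, h0, h2, hp', hM, h0', h2', hM0⟩ := exists_chi
  set Q : E n × E k → ℝ := fun x => ∑ i, W (Sum.inl i) x * x.1 i with hQ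
  have hQc : ContinuousOn Q (Cl n k a b) := by
    refine continuousOn_finsetSum _ fun i _ => (hWc _).mul ?_
    exact (contDiff_co (r := 1) (Sum.inl i)).continuous.continuousOn
  obtain ⟨C, hC0, hCv⟩ := layer_volume (n := n) (k := k) (R := R) ha hab
  have hKQ : ContinuousOn Q (Cl n k a b ∩ {x | ‖x.2‖ ≤ R}) := hQc.mono inter_subset_left
  have hnc : Continuous fun x : E n × E k => ‖x.1‖ ^ 2 := continuous_fst.norm.pow 2
  -- near the outer boundary
  have hKb : ∀ δ > 0, ∃ e > 0, ∀ x ∈ Cl n k a b, ‖x.2‖ ≤ R → b ^ 2 - e ≤ ‖x.1‖ ^ 2 →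
      -δ ≤ Q x := by
    intro δ hδ
    have hcomp : IsCompact ((Cl n k a b ∩ {x | ‖x.2‖ ≤ R}) ∩ Q ⁻¹' Iic (-δ)) :=
      isCompact_ClR.of_isClosed_subset
        (hKQ.preimage_isClosed_of_isClosed isCompact_ClR.isClosed isClosed_Iic) inter_subset_left
    obtain ⟨e, he, hle⟩ := hcomp.exists_forall_le' (f := fun x => b ^ 2 - ‖x.1‖ ^ 2) (a := 0)
      (continuous_const.sub hnc).continuousOn (by
        rintro x ⟨⟨h1, h3⟩, h4⟩
        have hlt : ‖x.1‖ < b := by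
          refine lt_of_le_of_ne h1.2 fun h => ?_
          have := hQb x h
          have h4 : Q x ≤ -δ := h4
          linarith
        have := pow_lt_pow_left₀ hlt (norm_nonneg _) two_ne_zero
        simpa using this)
    refine ⟨e / 2, by positivity, fun x hx hR hxe => ?_⟩
    by_contra! hc
    have := hle x ⟨⟨hx, hR⟩, hc.le⟩
    linarith
  have hKa : ∀ δ > 0, ∃ e > 0, ∀ x ∈ Cl n k a b, ‖x.2‖ ≤ R → ‖x.1‖ ^ 2 ≤ a ^ 2 + e →
      Q x ≤ δ := by
    intro δ hδ
    have hcomp : IsCompact ((Cl n k a b ∩ {x | ‖x.2‖ ≤ R}) ∩ Q ⁻¹' Ici δ) :=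
      isCompact_ClR.of_isClosed_subset
        (hKQ.preimage_isClosed_of_isClosed isCompact_ClR.isClosed isClosed_Ici) inter_subset_left
    obtain ⟨e, he, hle⟩ := hcomp.exists_forall_le' (f := fun x => ‖x.1‖ ^ 2 - a ^ 2) (a := 0)
      (hnc.sub continuous_const).continuousOn (by
        rintro x ⟨⟨h1, h3⟩, h4⟩
        have hlt : a < ‖x.1‖ := by
          refine lt_of_le_of_ne h1.1 fun h => ?_
          have := hQa x h.symm
          have h4 : δ ≤ Q x := h4
          linarith
        have := pow_lt_pow_left₀ hlt ha.le two_ne_zero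
        simpa using this)
    refine ⟨e / 2, by positivity, fun x hx hR hxe => ?_⟩
    by_contra! hc
    have := hle x ⟨⟨hx, hR⟩, hc.le⟩
    linarith
  have htend : Tendsto (fun ε : ℝ => ∫ x in Sh n k a b,
      χ ((‖x.1‖ ^ 2 - a ^ 2) / ε) * χ ((b ^ 2 - ‖x.1‖ ^ 2) / ε) * D x) (𝓝[>] 0)
      (𝓝 (∫ x in Sh n k a b, D x)) := by
    refine tendsto_integral_filter_of_dominated_convergence (fun x => ‖D x‖) ?_ ?_ hDint.norm ?_
    · filter_upwards with ε
      refine AEStronglyMeasurable.mul ?_ hDint.aestronglyMeasurable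
      refine Continuous.aestronglyMeasurable ?_
      exact (hC.continuous.comp ((hnc.sub continuous_const).div_const _)).mul
        (hC.continuous.comp ((continuous_const.sub hnc).div_const _))
    · filter_upwards with ε
      filter_upwards with x
      rw [norm_mul, Real.norm_of_nonneg (mul_nonneg (hp _) (hp _))]
      exact mul_le_of_le_one_left (norm_nonneg _) (mul_le_one₀ (hl _) (hp _) (hl _))
    · filter_upwards [ae_restrict_mem isOpen_Sh.measurableSet] with x hx
      refine tendsto_const_nhds.congr' ?_
      have p1 : 0 < (‖x.1‖ ^ 2 - a ^ 2) / 2 := by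
        have := pow_lt_pow_left₀ hx.1 ha.le two_ne_zero
        linarith
      have p2 : 0 < (b ^ 2 - ‖x.1‖ ^ 2) / 2 := by
        have := pow_lt_pow_left₀ hx.2 (norm_nonneg _) two_ne_zero
        linarith
      filter_upwards [nhdsWithin_le_nhds (gt_mem_nhds p1), nhdsWithin_le_nhds (gt_mem_nhds p2),
        self_mem_nhdsWithin] with ε e1 e2 e3
      have e3 : 0 < ε := e3
      rw [h2, h2]
      · simp
      · rw [le_div_iff₀ e3]; linarith
      · rw [le_div_iff₀ e3]; linarith
  have hmain : ∀ δ > 0, -(4 * M * δ * C) ≤ ∫ x in Sh n k a b, D x := by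
    intro δ hδ
    obtain ⟨eb, heb, hQb'⟩ := hKb δ hδ
    obtain ⟨ea, hea, hQa'⟩ := hKa δ hδ
    refine ge_of_tendsto htend ?_
    have q1 : 0 < eb / 2 := by positivity
    have q2 : 0 < ea / 2 := by positivity
    filter_upwards [nhdsWithin_le_nhds (gt_mem_nhds q1), nhdsWithin_le_nhds (gt_mem_nhds q2),
        self_mem_nhdsWithin, hCv] with ε e1 e2 e3 e4
    have e3 : 0 < ε := e3
    have hs := div_step ha hab hC hd hp hl h0 hp' hM h2' hM0 W hW hsupp D hD hDint e3 hδ.le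
      (fun x hx hR h => hQb' x hx hR (by linarith))
      (fun x hx hR h => hQa' x hx hR (by linarith))
    refine le_trans ?_ hs
    rw [neg_le_neg_iff]
    calc _ ≤ 4 * M * δ / ε * (C * ε) := mul_le_mul_of_nonneg_left e4 (by positivity)
      _ = _ := by field_simp
  have hlim : Tendsto (fun δ : ℝ => -(4 * M * δ * C)) (𝓝[>] 0) (𝓝 0) := by
    have : Continuous fun δ : ℝ => -(4 * M * δ * C) := by fun_prop
    have h := this.tendsto 0
    simp only [mul_zero, zero_mul, neg_zero] at h
    exact h.mono_left nhdsWithin_le_nhds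
  refine le_of_tendsto hlim ?_
  filter_upwards [self_mem_nhdsWithin] with δ hδ
  exact hmain δ hδ

lemma exists_eta (n k : ℕ) : ∃ (η h : ℝ → E n × E k → ℝ) (M : ℝ), 0 ≤ M ∧ ∀ R > 0,
    ContDiff ℝ 1 (η R) ∧ Continuous (h R) ∧ (∀ x, 0 ≤ η R x) ∧ (∀ x, η R x ≤ 1) ∧
    (∀ x, ‖x.2‖ ≤ R → η R x = 1 ∧ h R x = 0) ∧ (∀ x, 2 * R ≤ ‖x.2‖ → η R x = 0) ∧
    (∀ x, HP (η R) (Sum.elim (fun _ => 0) (fun j => -(h R x * x.2 j))) x) ∧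
    (∀ x, 0 ≤ h R x) ∧ (∀ x, h R x * ‖x.2‖ ^ 2 ≤ M) := by
  obtain ⟨χ, χ', M, hC, hd, hcont, hp, hl, h0, h2, hp', hM, h0', h2', hM0⟩ := exists_chi
  have hnc : Continuous fun x : E n × E k => ‖x.2‖ ^ 2 := continuous_snd.norm.pow 2
  refine ⟨fun R x => 1 - χ (‖x.2‖ ^ 2 * (R ^ 2)⁻¹), fun R x =>
    χ' (‖x.2‖ ^ 2 * (R ^ 2)⁻¹) * 2 * (R ^ 2)⁻¹, 4 * M, by positivity, fun R hR => ?_⟩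
  have hR2 : 0 < R ^ 2 := by positivity
  refine ⟨contDiff_const.sub (hC.comp (((contDiff_norm_sq ℝ).comp contDiff_snd).mul contDiff_const)),
    ?_, fun x => by linarith [hl (‖x.2‖ ^ 2 * (R ^ 2)⁻¹)],
    fun x => by linarith [hp (‖x.2‖ ^ 2 * (R ^ 2)⁻¹)], fun x hx => ?_, fun x hx => ?_, fun x => ?_,
    fun x => ?_, fun x => ?_⟩
  · exact ((hcont.comp (hnc.mul continuous_const)).mul continuous_const).mul continuous_const
  · have : ‖x.2‖ ^ 2 * (R ^ 2)⁻¹ ≤ 1 := by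
      rw [← div_eq_mul_inv, div_le_one hR2]; gcongr
    simp [h0 _ this, h0' _ this]
  · have : 2 ≤ ‖x.2‖ ^ 2 * (R ^ 2)⁻¹ := by
      rw [← div_eq_mul_inv, le_div_iff₀ hR2]
      nlinarith
    simp [h2 _ this]
  · refine ((HP.const 1).sub ((HP.normSq2.mul (HP.const _)).comp (hd _))).congr fun i => ?_
    rcases i with i | i
    · simp
    · simp; ring
  · have := hp' (‖x.2‖ ^ 2 * (R ^ 2)⁻¹)
    positivity
  · by_cases hx : 2 ≤ ‖x.2‖ ^ 2 * (R ^ 2)⁻¹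
    · simp only [h2' _ hx]; simp; positivity
    · have e : χ' (‖x.2‖ ^ 2 * (R ^ 2)⁻¹) * 2 * (R ^ 2)⁻¹ * ‖x.2‖ ^ 2 =
        2 * (χ' (‖x.2‖ ^ 2 * (R ^ 2)⁻¹) * (‖x.2‖ ^ 2 * (R ^ 2)⁻¹)) := by ring
      rw [e]
      have : χ' (‖x.2‖ ^ 2 * (R ^ 2)⁻¹) * (‖x.2‖ ^ 2 * (R ^ 2)⁻¹) ≤ M * 2 :=
        mul_le_mul (hM _) (not_le.1 hx).le (by positivity) hM0
      linarith

lemma exists_psi {n : ℕ} (hn : 1 ≤ n) {a : ℝ} (ha : 0 < a) : ∃ ψ ψ' : ℝ → ℝ,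
    (∀ s, 0 < s → HasDerivAt ψ (ψ' s) s) ∧ ContDiffOn ℝ 1 ψ (Ioi 0) ∧ ContinuousOn ψ' (Ioi 0) ∧
    (∀ s, 0 < s → n * ψ s + 2 * s * ψ' s = 1) ∧ ψ (a ^ 2) = 0 ∧ (∀ s, a ^ 2 < s → 0 < ψ s) ∧
    (∀ s, 0 < s → 0 ≤ ψ' s) := by
  have hn0 : (0:ℝ) < n := by exact_mod_cast hn
  refine ⟨fun s => (1 - a ^ n * s ^ (-(n / 2 : ℝ))) / n,
    fun s => (a ^ n * ((n / 2 : ℝ) * s ^ (-(n / 2 : ℝ) - 1))) / n, ?_, ?_, ?_, ?_, ?_, ?_, ?_⟩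
  · intro s hs
    have := ((((Real.hasDerivAt_rpow_const (p := -(n / 2 : ℝ)) (Or.inl hs.ne')).const_mul
      (a ^ n)).const_sub 1).div_const (n : ℝ))
    refine this.congr_deriv ?_
    ring
  · refine ContDiffOn.div_const (contDiffOn_const.sub (contDiffOn_const.mul ?_)) _
    intro s hs
    exact (Real.contDiffAt_rpow_const_of_ne (ne_of_gt hs)).contDiffWithinAt
  · refine ContinuousOn.div_const (continuousOn_const.mul (continuousOn_const.mul ?_)) _
    intro s hs
    exact (Real.continuousAt_rpow_const _ _ (Or.inl (ne_of_gt hs))).continuousWithinAt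
  · intro s hs
    simp only
    have : s ^ (-(n / 2 : ℝ)) = s ^ (-(n / 2 : ℝ) - 1) * s := by
      rw [← Real.rpow_add_one hs.ne']; congr 1; ring
    rw [this]
    field_simp
    ring
  · simp only
    have : (a ^ 2) ^ (-(n / 2 : ℝ)) = (a ^ n)⁻¹ := by
      rw [← Real.rpow_natCast a 2, ← Real.rpow_mul ha.le, ← Real.rpow_natCast a n,
        ← Real.rpow_neg ha.le]
      congr 1; push_cast; ring
    rw [this, mul_inv_cancel₀ (by positivity)]; simp
  · intro s hs
    have h1 : (a ^ 2) ^ (-(n / 2 : ℝ)) = (a ^ n)⁻¹ := by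
      rw [← Real.rpow_natCast a 2, ← Real.rpow_mul ha.le, ← Real.rpow_natCast a n,
        ← Real.rpow_neg ha.le]
      congr 1; push_cast; ring
    have h2 : s ^ (-(n / 2 : ℝ)) < (a ^ 2) ^ (-(n / 2 : ℝ)) :=
      Real.rpow_lt_rpow_of_neg (by positivity) hs (by linarith [half_pos hn0])
    rw [h1] at h2
    have h3 : a ^ n * s ^ (-(n / 2 : ℝ)) < 1 := by
      calc _ < a ^ n * (a ^ n)⁻¹ := by gcongr
        _ = 1 := mul_inv_cancel₀ (by positivity)
    exact div_pos (by linarith) hn0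
  · intro s hs
    positivity

/-- On a cylinder where `u = 0`, the gradient is normal. -/
lemma bdry_grad {n k : ℕ} {c : ℝ} (hc : 0 < c) {u : E n × E k → ℝ}
    (hbd : ∀ x : E n × E k, ‖x.1‖ = c → u x = 0) (x : E n × E k) (hx : ‖x.1‖ = c) :
    (∀ j, fderiv ℝ u x (bas (Sum.inr j)) = 0) ∧
    (∀ i, fderiv ℝ u x (bas (Sum.inl i)) =
      x.1 i / c ^ 2 * ∑ j, x.1 j * fderiv ℝ u x (bas (Sum.inl j))) := by
  by_cases hd : DifferentiableAt ℝ u x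
  swap
  · rw [fderiv_zero_of_not_differentiableAt hd]; simp
  have key : ∀ (γ : ℝ → E n × E k) (v : E n × E k), γ 0 = x → HasDerivAt γ v 0 →
      (∀ t, ‖(γ t).1‖ = c) → fderiv ℝ u x v = 0 := by
    intro γ v h0 hγ hn
    have h1 : HasDerivAt (fun t => u (γ t)) (fderiv ℝ u x v) 0 := by
      have : HasFDerivAt u (fderiv ℝ u x) (γ 0) := by rw [h0]; exact hd.hasFDerivAt
      exact this.comp_hasDerivAt 0 hγ
    have h2 : (fun t => u (γ t)) = fun _ => 0 := by
      funext t; exact hbd _ (hn t)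
    rw [h2] at h1
    exact h1.unique (hasDerivAt_const _ _)
  constructor
  · intro j
    refine key (fun t => x + t • bas (Sum.inr j)) _ (by simp) ?_ ?_
    · simpa using ((hasDerivAt_id (0:ℝ)).smul_const (bas (Sum.inr j) : E n × E k)).const_add x
    · intro t; simp [bas, hx]
  · intro i
    have htan : ∀ w : E n, inner ℝ x.1 w = 0 → fderiv ℝ u x (w, 0) = 0 := by
      intro w hw
      by_cases hw0 : w = 0
      · subst hw0; exact map_zero (fderiv ℝ u x)
      have hwn : 0 < ‖w‖ := norm_pos_iff.2 hw0
      -- normalise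
      obtain ⟨r, hr0, e⟩ : ∃ r > 0, ‖w‖ = r * c := ⟨‖w‖ / c, by positivity, by field_simp⟩
      refine key (fun t => (Real.cos (r * t) • x.1 + (Real.sin (r * t) / r) • w, x.2)) _ (by simp) ?_ ?_
      · refine HasDerivAt.prodMk ?_ (hasDerivAt_const _ _)
        have hrt : HasDerivAt (fun t : ℝ => r * t) r 0 := by
          simpa using (hasDerivAt_id (0:ℝ)).const_mul r
        have h1 := (hrt.cos.smul_const x.1).add ((hrt.sin.div_const r).smul_const w)
        refine h1.congr_deriv ?_
        simp [hr0.ne']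
      · intro t
        have : ‖Real.cos (r * t) • x.1 + (Real.sin (r * t) / r) • w‖ ^ 2 = c ^ 2 := by
          rw [norm_add_sq_real, inner_smul_left, inner_smul_right, hw, norm_smul, norm_smul, mul_pow,
            mul_pow, hx, Real.norm_eq_abs, Real.norm_eq_abs, sq_abs, sq_abs]
          rw [e]
          have := Real.sin_sq_add_cos_sq (r * t)
          field_simp
          simp only [mul_zero, add_zero]
          linear_combination (r * c ^ 2) * this
        exact (pow_left_inj₀ (norm_nonneg _) hc.le two_ne_zero).1 this
    set w : E n := EuclideanSpace.single i 1 - (x.1 i / c ^ 2) • x.1 with hw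
    have h1 := htan w (by
      rw [hw, inner_sub_right, inner_smul_right, real_inner_self_eq_norm_sq, hx,
        EuclideanSpace.inner_single_right]
      simp
      field_simp
      simp)
    have hsum : (x.1, (0 : E k)) = ∑ j, x.1 j • (bas (Sum.inl j) : E n × E k) := by
      refine Prod.ext ?_ ?_
      · simp only [Prod.fst_sum, Prod.smul_fst, bas, Sum.elim_inl]
        ext l
        simp [Pi.single_apply]
      · simp [Prod.snd_sum, bas]
    have hw2 : (w, (0 : E k)) = bas (Sum.inl i) - (x.1 i / c ^ 2) • (x.1, (0 : E k)) := by
      simp [hw, bas]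
    rw [hw2, map_sub, map_smul, hsum, map_sum] at h1
    simp only [map_smul, smul_eq_mul] at h1
    linarith

/-- partial derivative -/
def gr {n k : ℕ} (u : E n × E k → ℝ) (i : Fin n ⊕ Fin k) (x : E n × E k) : ℝ :=
  fderiv ℝ u x (bas i)

/-- squared gradient -/
def gsq {n k : ℕ} (u : E n × E k → ℝ) (x : E n × E k) : ℝ := ∑ i, gr u i x * gr u i x

/-- squared gradient in `y` -/
def gsqY {n k : ℕ} (u : E n × E k → ℝ) (x : E n × E k) : ℝ :=
  ∑ i, gr u (Sum.inl i) x * gr u (Sum.inl i) x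

/-- squared gradient in `z` -/
def gsqZ {n k : ℕ} (u : E n × E k → ℝ) (x : E n × E k) : ℝ :=
  ∑ i, gr u (Sum.inr i) x * gr u (Sum.inr i) x

/-- `y · ∇_y u` -/
def rad {n k : ℕ} (u : E n × E k → ℝ) (x : E n × E k) : ℝ := ∑ i, x.1 i * gr u (Sum.inl i) x

/-- `z · ∇_z u` -/
def zad {n k : ℕ} (u : E n × E k → ℝ) (x : E n × E k) : ℝ := ∑ i, x.2 i * gr u (Sum.inr i) x

section basic
variable {n k : ℕ} {u : E n × E k → ℝ} {x : E n × E k} {a b : ℝ}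

lemma gsq_eq : gsq u x = gsqY u x + gsqZ u x := by
  simp [gsq, gsqY, gsqZ, Fintype.sum_sum_type]

lemma gsqY_nonneg : 0 ≤ gsqY u x := Finset.sum_nonneg fun _ _ => mul_self_nonneg _
lemma gsqZ_nonneg : 0 ≤ gsqZ u x := Finset.sum_nonneg fun _ _ => mul_self_nonneg _

lemma rad_sq_le : rad u x ^ 2 ≤ ‖x.1‖ ^ 2 * gsqY u x := by
  have := Finset.sum_mul_sq_le_sq_mul_sq Finset.univ (fun i => x.1 i)
    (fun i => gr u (Sum.inl i) x)
  rw [EuclideanSpace.real_norm_sq_eq]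
  simpa [rad, gsqY, sq] using this

lemma zad_sq_le : zad u x ^ 2 ≤ ‖x.2‖ ^ 2 * gsqZ u x := by
  have := Finset.sum_mul_sq_le_sq_mul_sq Finset.univ (fun i => x.2 i)
    (fun i => gr u (Sum.inr i) x)
  rw [EuclideanSpace.real_norm_sq_eq]
  simpa [zad, gsqZ, sq] using this

lemma cont_gr (hu1' : ContinuousOn (fderiv ℝ u) (Cl n k a b)) (i : Fin n ⊕ Fin k) :
    ContinuousOn (gr u i) (Cl n k a b) := hu1'.clm_apply continuousOn_const

lemma cont_co (i : Fin n ⊕ Fin k) (s : Set (E n × E k)) :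
    ContinuousOn (co i : E n × E k → ℝ) s := (contDiff_co (r := 1) i).continuous.continuousOn

lemma cont_gsq (hu1' : ContinuousOn (fderiv ℝ u) (Cl n k a b)) :
    ContinuousOn (gsq u) (Cl n k a b) :=
  continuousOn_finsetSum _ fun i _ => (cont_gr hu1' i).mul (cont_gr hu1' i)

lemma cont_gsqY (hu1' : ContinuousOn (fderiv ℝ u) (Cl n k a b)) :
    ContinuousOn (gsqY u) (Cl n k a b) :=
  continuousOn_finsetSum _ fun i _ => (cont_gr hu1' _).mul (cont_gr hu1' _)

lemma cont_rad (hu1' : ContinuousOn (fderiv ℝ u) (Cl n k a b)) :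
    ContinuousOn (rad u) (Cl n k a b) :=
  continuousOn_finsetSum _ fun i _ => (cont_co (Sum.inl i) _).mul (cont_gr hu1' _)

lemma cont_zad (hu1' : ContinuousOn (fderiv ℝ u) (Cl n k a b)) :
    ContinuousOn (zad u) (Cl n k a b) :=
  continuousOn_finsetSum _ fun i _ => (cont_co (Sum.inr i) _).mul (cont_gr hu1' _)

lemma C1_gr (hu2 : ContDiffOn ℝ 2 u (Sh n k a b)) (i : Fin n ⊕ Fin k) :
    ContDiffOn ℝ 1 (gr u i) (Sh n k a b) :=
  (hu2.fderiv_of_isOpen isOpen_Sh (m := 1) (by norm_num)).clm_apply contDiffOn_const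

lemma HP_u (hu2 : ContDiffOn ℝ 2 u (Sh n k a b)) (hx : x ∈ Sh n k a b) :
    HP u (fun i => gr u i x) x :=
  ⟨(hu2.contDiffAt (isOpen_Sh.mem_nhds hx)).differentiableAt (by simp), fun _ => rfl⟩

lemma HP_gr (hu2 : ContDiffOn ℝ 2 u (Sh n k a b)) (hx : x ∈ Sh n k a b) (j : Fin n ⊕ Fin k) :
    HP (gr u j) (fun i => gr (gr u j) i x) x :=
  ⟨((C1_gr hu2 j).contDiffAt (isOpen_Sh.mem_nhds hx)).differentiableAt (by simp), fun _ => rfl⟩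

lemma gr_symm (hu2 : ContDiffOn ℝ 2 u (Sh n k a b)) (hx : x ∈ Sh n k a b) (i j : Fin n ⊕ Fin k) :
    gr (gr u j) i x = gr (gr u i) j x := by
  have hc : ContDiffAt ℝ 2 u x := hu2.contDiffAt (isOpen_Sh.mem_nhds hx)
  have hs := hc.isSymmSndFDerivAt (by simp)
  have hd : DifferentiableAt ℝ (fderiv ℝ u) x :=
    (hc.fderiv_right (m := 1) (by norm_num)).differentiableAt (by simp)
  have h : ∀ i j : Fin n ⊕ Fin k, gr (gr u j) i x = fderiv ℝ (fderiv ℝ u) x (bas i) (bas j) := by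
    intro i j
    have : HasFDerivAt (gr u j) ((fderiv ℝ (fderiv ℝ u) x).flip (bas j)) x := by
      have := hd.hasFDerivAt.clm_apply (hasFDerivAt_const (bas j : E n × E k) x)
      simp only [ContinuousLinearMap.comp_zero, zero_add] at this
      exact this
    rw [gr, this.fderiv]; rfl
  rw [h, h]; exact hs.eq _ _

end basic

/-- Poincaré: `u ∈ L²`. -/
lemma poincare {n k : ℕ} {a b : ℝ} {u : E n × E k → ℝ} (hn : 2 ≤ n) (ha : 0 < a) (hab : a < b)
    (hu2 : ContDiffOn ℝ 2 u (Sh n k a b)) (hu1 : ContinuousOn u (Cl n k a b))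
    (hu1' : ContinuousOn (fderiv ℝ u) (Cl n k a b))
    (hbd : ∀ x : E n × E k, ‖x.1‖ = a ∨ ‖x.1‖ = b → u x = 0)
    (hint1 : IntegrableOn (gsq u) (Sh n k a b)) :
    IntegrableOn (fun x => u x * u x) (Sh n k a b) := by
  have hb : 0 < b := ha.trans hab
  obtain ⟨η, h, M, hM, hη⟩ := exists_eta n k
  have hSm : MeasurableSet (Sh n k a b) := isOpen_Sh.measurableSet
  have hcover : AECover (volume.restrict (Sh n k a b)) atTop
      (fun j : ℕ => {x : E n × E k | ‖x.2‖ ≤ (j + 1 : ℝ)}) := by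
    refine ⟨?_, fun j => ?_⟩
    · filter_upwards with x
      filter_upwards [eventually_ge_atTop ⌈‖x.2‖⌉₊] with j hj
      have := Nat.le_of_ceil_le hj
      change ‖x.2‖ ≤ (j + 1 : ℝ); linarith
    · exact (isClosed_le continuous_snd.norm continuous_const).measurableSet
  -- integrability of compactly supported things
  have hcomp : ∀ (R : ℝ) (f : E n × E k → ℝ), ContinuousOn f (Cl n k a b) →
      (∀ x, R ≤ ‖x.2‖ → f x = 0) → IntegrableOn f (Sh n k a b) := by
    intro R f hf hz
    have h1 : IntegrableOn f (Cl n k a b ∩ {x | ‖x.2‖ ≤ R}) :=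
      (hf.mono inter_subset_left).integrableOn_compact isCompact_ClR
    have h2 : IntegrableOn f (Cl n k a b) := by
      refine h1.of_forall_sdiff_eq_zero isClosed_Cl.measurableSet ?_
      rintro x ⟨hx1, hx2⟩
      refine hz x ?_
      by_contra! hc
      exact hx2 ⟨hx1, hc.le⟩
    exact h2.mono_set Sh_sub_Cl
  refine hcover.integrable_of_integral_bounded_of_nonneg_ae (b ^ 2 * ∫ x in Sh n k a b, gsq u x)
    ?_ ?_ ?_
  · intro j
    rw [IntegrableOn, Measure.restrict_restrict
      (isClosed_le continuous_snd.norm continuous_const).measurableSet]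
    have h1 : IntegrableOn (fun x => u x * u x) (Cl n k a b ∩ {x | ‖x.2‖ ≤ (j + 1 : ℝ)}) :=
      ((hu1.mul hu1).mono inter_subset_left).integrableOn_compact isCompact_ClR
    refine h1.mono_set ?_
    rintro x ⟨hx1, hx2⟩
    exact ⟨Sh_sub_Cl hx2, hx1⟩
  · filter_upwards with x
    exact mul_self_nonneg _
  · filter_upwards with j
    have hR : (0:ℝ) < j + 1 := by positivity
    set R : ℝ := j + 1 with hRdef
    obtain ⟨e1, e2, e3, e4, e5, e6, e7, e8, e9⟩ := hη R hR
    have hηc : ContinuousOn (η R) (Cl n k a b) := e1.continuous.continuousOn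
    set D : E n × E k → ℝ := fun x => -(η R x * (n * (u x * u x) + 2 * (u x * rad u x))) with hD
    have hDi : IntegrableOn D (Sh n k a b) := by
      refine hcomp (2 * R) D ?_ fun x hx => by simp [hD, e6 x hx]
      exact (hηc.mul ((continuousOn_const.mul (hu1.mul hu1)).add
        (continuousOn_const.mul (hu1.mul (cont_rad hu1'))))).neg
    have hηu : IntegrableOn (fun x => η R x * (u x * u x)) (Sh n k a b) :=
      hcomp (2 * R) _ (hηc.mul (hu1.mul hu1)) fun x hx => by simp [e6 x hx]
    set W : Fin n ⊕ Fin k → E n × E k → ℝ := Sum.elim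
      (fun i x => (-1) * (η R x * (u x * u x * co (Sum.inl i) x))) (fun _ _ => 0) with hW
    have huC : ContDiffOn ℝ 1 u (Sh n k a b) := hu2.of_le (by norm_num)
    have key : 0 ≤ ∫ x in Sh n k a b, D x := by
      refine div_nonneg' (R := 2 * R) ha hab W ?_ ?_ ?_ ?_ ?_ D ?_ hDi
      · rintro (i | i)
        · exact contDiffOn_const.mul (e1.contDiffOn.mul ((huC.mul huC).mul
            (contDiff_co _).contDiffOn))
        · exact contDiffOn_const
      · rintro (i | i)
        · exact continuousOn_const.mul (hηc.mul ((hu1.mul hu1).mul (cont_co _ _)))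
        · exact continuousOn_const
      · rintro (i | i) x hx
        · simp [hW, e6 x hx]
        · simp [hW]
      · intro x hx
        simp [hW, hbd x (Or.inr hx)]
      · intro x hx
        simp [hW, hbd x (Or.inl hx)]
      · intro x hx
        rw [Fintype.sum_sum_type]
        have hi : ∀ i, fderiv ℝ (W (Sum.inl i)) x (bas (Sum.inl i)) = _ := fun i =>
          ((HP.const (-1)).mul ((e7 x).mul (((HP_u hu2 hx).mul (HP_u hu2 hx)).mul
            (HP.co (Sum.inl i))))).eq (Sum.inl i)
        rw [Finset.sum_congr rfl fun i _ => hi i]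
        have hj : ∀ i, fderiv ℝ (W (Sum.inr i)) x (bas (Sum.inr i)) = 0 := fun i => by simp [hW]
        rw [Finset.sum_congr rfl fun i _ => hj i]
        simp only [Sum.elim_inl, hD, rad, Finset.mul_sum, Finset.sum_const_zero, add_zero, zero_mul,
          zero_add, if_true, mul_one]
        have hn' : ∀ y : ℝ, (n:ℝ) * y = ∑ _i : Fin n, y := fun y => by simp
        rw [hn', ← Finset.sum_add_distrib, Finset.mul_sum, ← Finset.sum_neg_distrib]
        refine Finset.sum_congr rfl fun i _ => ?_
        simp only [co, Sum.elim_inl]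
        ring
    have hle : ∀ x ∈ Sh n k a b, η R x * (u x * u x) ≤ b ^ 2 * gsq u x - D x := by
      intro x hx
      have h1 : rad u x ^ 2 ≤ b ^ 2 * gsq u x := by
        refine rad_sq_le.trans ?_
        rw [gsq_eq]
        have := gsqZ_nonneg (u := u) (x := x)
        have h3 := gsqY_nonneg (u := u) (x := x)
        have : ‖x.1‖ ≤ b := hx.2.le
        gcongr
        linarith
      have h2 : (2:ℝ) ≤ n := by exact_mod_cast hn
      have h3 := e3 x
      have h4 := e4 x
      have h5 : 0 ≤ (u x + rad u x) ^ 2 := sq_nonneg _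
      have h6 : - (b ^ 2 * gsq u x) ≤ (n * (u x * u x) + 2 * (u x * rad u x)) - u x * u x := by
        nlinarith [mul_self_nonneg (u x)]
      have h7 : 0 ≤ b ^ 2 * gsq u x := (sq_nonneg _).trans h1
      have h8 : η R x * (-(b ^ 2 * gsq u x)) ≤
          η R x * ((n * (u x * u x) + 2 * (u x * rad u x)) - u x * u x) :=
        mul_le_mul_of_nonneg_left h6 h3
      have h9 : η R x * (b ^ 2 * gsq u x) ≤ b ^ 2 * gsq u x := mul_le_of_le_one_left h7 h4
      simp only [hD]
      linarith
    rw [Measure.restrict_restrict (isClosed_le continuous_snd.norm continuous_const).measurableSet,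
      inter_comm]
    have hBm : MeasurableSet (Sh n k a b ∩ {x | ‖x.2‖ ≤ R}) :=
      hSm.inter (isClosed_le continuous_snd.norm continuous_const).measurableSet
    have hbi : IntegrableOn (fun x => b ^ 2 * gsq u x - D x) (Sh n k a b) :=
      (hint1.const_mul (b ^ 2)).sub hDi
    calc ∫ x in Sh n k a b ∩ {x | ‖x.2‖ ≤ R}, u x * u x
        = ∫ x in Sh n k a b ∩ {x | ‖x.2‖ ≤ R}, η R x * (u x * u x) := by
          refine setIntegral_congr_fun hBm fun x hx => ?_
          simp [(e5 x hx.2).1]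
      _ ≤ ∫ x in Sh n k a b, η R x * (u x * u x) := by
          refine setIntegral_mono_set hηu ?_ (LE.le.eventuallyLE inter_subset_left)
          filter_upwards with x
          exact mul_nonneg (e3 x) (mul_self_nonneg _)
      _ ≤ ∫ x in Sh n k a b, (b ^ 2 * gsq u x - D x) :=
          setIntegral_mono_on hηu hbi hSm hle
      _ = b ^ 2 * (∫ x in Sh n k a b, gsq u x) - ∫ x in Sh n k a b, D x := by
          rw [integral_sub (hint1.const_mul _) hDi, integral_const_mul]
      _ ≤ _ := by linarith

lemma alg {ι : Type*} [Fintype ι] (X g : ι → ℝ) (DX H : ι → ι → ℝ)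
    (Hs : ∀ i j, H i j = H j i) (F f u c : ℝ) (hlap : ∑ i, H i i = -f) :
    ∑ i, (((∑ j, (DX j i * g j + X j * H j i)) * g i + (∑ j, X j * g j) * H i i) -
      (DX i i * (1 / 2 * ∑ j, g j * g j - F) +
        X i * (0 * (∑ j, g j * g j) + 1 / 2 * ∑ j, (H j i * g j + g j * H j i) - f * g i)) +
      (0 * (u * g i) + c * (g i * g i + u * H i i))) =
    ∑ i, ∑ j, DX j i * g j * g i - (∑ i, DX i i) * (1 / 2 * ∑ j, g j * g j - F) +
      c * (∑ j, g j * g j - u * f) := by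
  set Gs := ∑ j, g j * g j with hGs
  set L := ∑ j, X j * g j with hL
  have e1 : ∑ i, (∑ j, X j * H j i) * g i = ∑ i, X i * ∑ j, g j * H j i := by
    simp only [Finset.sum_mul, Finset.mul_sum]
    rw [Finset.sum_comm]
    refine Finset.sum_congr rfl fun i _ => Finset.sum_congr rfl fun j _ => ?_
    rw [Hs i j]; ring
  have e2 : ∀ i, (∑ j, (DX j i * g j + X j * H j i)) * g i =
      (∑ j, DX j i * g j * g i) + (∑ j, X j * H j i) * g i := by
    intro i
    rw [Finset.sum_add_distrib, add_mul, Finset.sum_mul]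
  have e3 : ∀ i, ∑ j, (H j i * g j + g j * H j i) = 2 * ∑ j, g j * H j i := by
    intro i
    rw [Finset.mul_sum]
    exact Finset.sum_congr rfl fun j _ => by ring
  have e4 : ∑ i, X i * (f * g i) = f * L := by
    rw [hL, Finset.mul_sum]; exact Finset.sum_congr rfl fun j _ => by ring
  have e5 : ∀ i, (((∑ j, (DX j i * g j + X j * H j i)) * g i + L * H i i) -
      (DX i i * (1 / 2 * Gs - F) +
        X i * (0 * Gs + 1 / 2 * ∑ j, (H j i * g j + g j * H j i) - f * g i)) +
      (0 * (u * g i) + c * (g i * g i + u * H i i))) =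
      (∑ j, DX j i * g j * g i) + (∑ j, X j * H j i) * g i + L * H i i -
        DX i i * (1 / 2 * Gs - F) - X i * (∑ j, g j * H j i) + X i * (f * g i) +
        c * (g i * g i) + c * u * H i i := by
    intro i; rw [e2, e3]; ring
  rw [Finset.sum_congr rfl fun i _ => e5 i]
  simp only [Finset.sum_add_distrib, Finset.sum_sub_distrib]
  rw [e1, e4, ← Finset.mul_sum, ← Finset.mul_sum, ← Finset.mul_sum, ← Finset.sum_mul, hlap, ← hGs]
  ring

/-- The vector field. -/
def Xf {n k : ℕ} (ψ : ℝ → ℝ) : Fin n ⊕ Fin k → E n × E k → ℝ :=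
  Sum.elim (fun i x => ψ (‖x.1‖ ^ 2) * co (Sum.inl i) x) (fun j x => co (Sum.inr j) x)

/-- The derivative of the vector field.. -/
def DXf {n k : ℕ} (ψ ψ' : ℝ → ℝ) (x : E n × E k) : Fin n ⊕ Fin k → Fin n ⊕ Fin k → ℝ :=
  Sum.elim
    (fun j => Sum.elim (fun i => ψ' (‖x.1‖ ^ 2) * (2 * x.1 i) * x.1 j +
      ψ (‖x.1‖ ^ 2) * (if i = j then 1 else 0)) (fun _ => 0))
    (fun j => Sum.elim (fun _ => 0) (fun i => if i = j then 1 else 0))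

/-- The Pohozaev field. -/
def Tf {n k : ℕ} (ψ : ℝ → ℝ) (u : E n × E k → ℝ) (p c : ℝ) (i : Fin n ⊕ Fin k)
    (x : E n × E k) : ℝ :=
  (∑ j, Xf ψ j x * gr u j x) * gr u i x -
    Xf ψ i x * (1 / 2 * (∑ j, gr u j x * gr u j x) - |u x| ^ p / p) + c * (u x * gr u i x)

section field
variable {n k : ℕ} {u : E n × E k → ℝ} {x : E n × E k} {ψ ψ' : ℝ → ℝ} {p c : ℝ}

lemma HP_Xf (hψ : HasDerivAt ψ (ψ' (‖x.1‖ ^ 2)) (‖x.1‖ ^ 2)) (j : Fin n ⊕ Fin k) :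
    HP (Xf ψ j) (DXf ψ ψ' x j) x := by
  rcases j with j | j
  · refine ((HP.normSq1.comp hψ).mul (HP.co (Sum.inl j))).congr fun i => ?_
    rcases i with i | i
    · simp [DXf, co]
    · simp [DXf]
  · refine (HP.co (Sum.inr j)).congr fun i => ?_
    rcases i with i | i
    · simp [DXf]
    · simp [DXf]

lemma sum_DXf : ∑ i, DXf ψ ψ' x i i = n * ψ (‖x.1‖ ^ 2) + 2 * ‖x.1‖ ^ 2 * ψ' (‖x.1‖ ^ 2) + k := by
  rw [Fintype.sum_sum_type]
  simp only [DXf, Sum.elim_inl, Sum.elim_inr, if_true, Finset.sum_add_distrib]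
  simp only [mul_one, Finset.sum_const, Finset.card_univ, Fintype.card_fin, nsmul_eq_mul]
  have : ∑ i, ψ' (‖x.1‖ ^ 2) * (2 * x.1 i) * x.1 i = 2 * ‖x.1‖ ^ 2 * ψ' (‖x.1‖ ^ 2) := by
    nth_rw 2 [EuclideanSpace.real_norm_sq_eq]
    rw [Finset.mul_sum, Finset.sum_mul]
    exact Finset.sum_congr rfl fun i _ => by ring
  rw [this]; ring

lemma quad_DXf : ∑ i, ∑ j, DXf ψ ψ' x j i * gr u j x * gr u i x =
    2 * ψ' (‖x.1‖ ^ 2) * rad u x ^ 2 + ψ (‖x.1‖ ^ 2) * gsqY u x + gsqZ u x := by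
  simp only [Fintype.sum_sum_type, DXf, Sum.elim_inl, Sum.elim_inr, zero_mul, Finset.sum_const_zero,
    add_zero, zero_add]
  congr 1
  · simp only [add_mul, Finset.sum_add_distrib]
    congr 1
    · rw [show rad u x ^ 2 = rad u x * rad u x from sq _, rad, Finset.sum_mul_sum, Finset.mul_sum]
      refine Finset.sum_congr rfl fun i _ => ?_
      rw [Finset.mul_sum]
      exact Finset.sum_congr rfl fun j _ => by ring
    · rw [gsqY, Finset.mul_sum]
      refine Finset.sum_congr rfl fun i _ => ?_
      simp; ring
  · rw [gsqZ]
    refine Finset.sum_congr rfl fun i _ => ?_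
    simp

lemma Xg : ∑ j, Xf ψ j x * gr u j x = ψ (‖x.1‖ ^ 2) * rad u x + zad u x := by
  rw [Fintype.sum_sum_type, rad, zad, Finset.mul_sum]
  simp only [Xf, co, Sum.elim_inl, Sum.elim_inr, mul_assoc]

lemma Ty : ∑ i, Tf ψ u p c (Sum.inl i) x * x.1 i =
    (ψ (‖x.1‖ ^ 2) * rad u x + zad u x) * rad u x -
      ψ (‖x.1‖ ^ 2) * ‖x.1‖ ^ 2 * (1 / 2 * gsq u x - |u x| ^ p / p) + c * (u x * rad u x) := by
  simp only [Tf, Xg]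
  have h1 : rad u x = ∑ i, x.1 i * gr u (Sum.inl i) x := rfl
  have h2 := EuclideanSpace.real_norm_sq_eq x.1
  have h3 : ∑ j, gr u j x * gr u j x = gsq u x := rfl
  have h4 : ∀ i : Fin n, Xf ψ (Sum.inl i) x = ψ (‖x.1‖ ^ 2) * x.1 i := fun _ => rfl
  simp only [h3, h4]
  generalize ψ (‖x.1‖ ^ 2) = P
  rw [h2]
  generalize 1 / 2 * gsq u x - |u x| ^ p / p = K
  generalize hA : P * rad u x + zad u x = A
  rw [h1]
  simp only [Finset.mul_sum, Finset.sum_mul, ← Finset.sum_sub_distrib, ← Finset.sum_add_distrib]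
  refine Finset.sum_congr rfl fun i _ => ?_
  ring

lemma Tz : ∑ i, x.2 i * Tf ψ u p c (Sum.inr i) x =
    (ψ (‖x.1‖ ^ 2) * rad u x + zad u x) * zad u x -
      ‖x.2‖ ^ 2 * (1 / 2 * gsq u x - |u x| ^ p / p) + c * (u x * zad u x) := by
  simp only [Tf, Xg]
  have h1 : zad u x = ∑ i, x.2 i * gr u (Sum.inr i) x := rfl
  have h2 := EuclideanSpace.real_norm_sq_eq x.2
  have h3 : ∑ j, gr u j x * gr u j x = gsq u x := rfl
  rw [h3, h2]
  generalize 1 / 2 * gsq u x - |u x| ^ p / p = K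
  generalize hA : ψ (‖x.1‖ ^ 2) * rad u x + zad u x = A
  rw [h1]
  simp only [Finset.mul_sum, Finset.sum_mul, ← Finset.sum_sub_distrib, ← Finset.sum_add_distrib]
  refine Finset.sum_congr rfl fun i _ => ?_
  simp only [Xf, co, Sum.elim_inr]
  ring

variable {a b : ℝ}

lemma HP_Tf (hp : 2 < p) (hu2 : ContDiffOn ℝ 2 u (Sh n k a b)) (hx : x ∈ Sh n k a b)
    (hψ : HasDerivAt ψ (ψ' (‖x.1‖ ^ 2)) (‖x.1‖ ^ 2)) (i : Fin n ⊕ Fin k) :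
    HP (Tf ψ u p c i) (fun l =>
      ((∑ j, (DXf ψ ψ' x j l * gr u j x + Xf ψ j x * gr (gr u j) l x)) * gr u i x +
        (∑ j, Xf ψ j x * gr u j x) * gr (gr u i) l x) -
      (DXf ψ ψ' x i l * (1 / 2 * ∑ j, gr u j x * gr u j x - |u x| ^ p / p) +
        Xf ψ i x * (0 * (∑ j, gr u j x * gr u j x) +
          1 / 2 * ∑ j, (gr (gr u j) l x * gr u j x + gr u j x * gr (gr u j) l x) -
          |u x| ^ (p - 2) * u x * gr u l x)) +
      (0 * (u x * gr u i x) + c * (gr u l x * gr u i x + u x * gr (gr u i) l x))) x := by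
  have hg := HP_gr hu2 hx
  have hu := HP_u hu2 hx
  have hX := HP_Xf (n := n) (k := k) (x := x) hψ
  have hF : HP (fun y => |u y| ^ p / p) (fun l => |u x| ^ (p - 2) * u x * gr u l x) x := by
    refine hu.comp (φ := fun t => |t| ^ p / p) ?_
    refine ((hasDerivAt_abs_rpow (u x) (by linarith : 1 < p)).div_const p).congr_deriv ?_
    have : p ≠ 0 := by linarith
    field_simp
  exact ((((HP.sum _ fun j _ => (hX j).mul (hg j)).mul (hg i)).sub
    ((hX i).mul (((HP.const (1 / 2)).mul (HP.sum _ fun j _ => (hg j).mul (hg j))).sub hF))).add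
    ((HP.const c).mul (hu.mul (hg i))))

lemma div_Tf (hp : 2 < p) (hu2 : ContDiffOn ℝ 2 u (Sh n k a b)) (hx : x ∈ Sh n k a b)
    (hψ : HasDerivAt ψ (ψ' (‖x.1‖ ^ 2)) (‖x.1‖ ^ 2))
    (hlap : ∑ i, gr (gr u i) i x = -(|u x| ^ (p - 2) * u x)) :
    ∑ i, fderiv ℝ (Tf ψ u p c i) x (bas i) =
      2 * ψ' (‖x.1‖ ^ 2) * rad u x ^ 2 + ψ (‖x.1‖ ^ 2) * gsqY u x + gsqZ u x -
      (n * ψ (‖x.1‖ ^ 2) + 2 * ‖x.1‖ ^ 2 * ψ' (‖x.1‖ ^ 2) + k) *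
        (1 / 2 * gsq u x - |u x| ^ p / p) + c * (gsq u x - |u x| ^ p) := by
  rw [Finset.sum_congr rfl fun i _ => (HP_Tf (c := c) hp hu2 hx hψ i).eq i]
  have h := alg (fun j => Xf ψ j x) (fun j => gr u j x) (DXf ψ ψ' x)
    (fun j i => gr (gr u j) i x) (fun i j => gr_symm hu2 hx j i) (|u x| ^ p / p)
    (|u x| ^ (p - 2) * u x) (u x) c hlap
  rw [quad_DXf, sum_DXf] at h
  have e : u x * (|u x| ^ (p - 2) * u x) = |u x| ^ p := by
    by_cases h0 : u x = 0
    · rw [h0]; simp [Real.zero_rpow (by linarith : p ≠ 0)]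
    · have : |u x| ^ p = |u x| ^ (p - 2) * |u x| ^ (2:ℝ) := by
        rw [← Real.rpow_add (abs_pos.2 h0)]; congr 1; ring
      rw [this]
      norm_num
      ring
  rw [e] at h
  exact h

lemma Tf_C1 (ha : 0 < a) (hp : 2 < p) (hu2 : ContDiffOn ℝ 2 u (Sh n k a b))
    (hψ : ContDiffOn ℝ 1 ψ (Ioi 0)) (i : Fin n ⊕ Fin k) :
    ContDiffOn ℝ 1 (Tf ψ u p c i) (Sh n k a b) := by
  have hg := C1_gr hu2
  have hu : ContDiffOn ℝ 1 u (Sh n k a b) := hu2.of_le (by norm_num)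
  have hX : ∀ j, ContDiffOn ℝ 1 (Xf ψ j) (Sh n k a b) := by
    rintro (j | j)
    · refine ContDiffOn.mul ?_ (contDiff_co _).contDiffOn
      refine hψ.comp (((contDiff_norm_sq ℝ).comp contDiff_fst).contDiffOn) ?_
      intro x hx
      have : 0 < ‖x.1‖ := ha.trans hx.1
      exact pow_pos this 2
    · exact (contDiff_co (Sum.inr j)).contDiffOn
  have hF : ContDiffOn ℝ 1 (fun x => |u x| ^ p / p) (Sh n k a b) := by
    have := (contDiff_norm_rpow (E := ℝ) (by linarith : 1 < p)).comp_contDiffOn hu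
    exact this.div_const p
  exact (((ContDiffOn.sum fun j _ => (hX j).mul (hg j)).mul (hg i)).sub
    ((hX i).mul ((contDiffOn_const.mul (ContDiffOn.sum fun j _ => (hg j).mul (hg j))).sub hF))).add
    (contDiffOn_const.mul (hu.mul (hg i)))

lemma Tf_cont (ha : 0 < a) (hp : 2 < p) (hu1 : ContinuousOn u (Cl n k a b))
    (hu1' : ContinuousOn (fderiv ℝ u) (Cl n k a b))
    (hψ : ContDiffOn ℝ 1 ψ (Ioi 0)) (i : Fin n ⊕ Fin k) :
    ContinuousOn (Tf ψ u p c i) (Cl n k a b) := by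
  have hg := cont_gr hu1'
  have hX : ∀ j, ContinuousOn (Xf ψ j) (Cl n k a b) := by
    rintro (j | j)
    · refine ContinuousOn.mul ?_ (cont_co _ _)
      refine hψ.continuousOn.comp (continuous_fst.norm.pow 2).continuousOn ?_
      intro x hx
      have : 0 < ‖x.1‖ := ha.trans_le hx.1
      exact pow_pos this 2
    · exact cont_co (Sum.inr j) _
  have hF : ContinuousOn (fun x => |u x| ^ p / p) (Cl n k a b) :=
    (hu1.abs.rpow_const fun x _ => Or.inr (by linarith)).div_const p
  exact (((continuousOn_finsetSum _ fun j _ => (hX j).mul (hg j)).mul (hg i)).sub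
    ((hX i).mul ((continuousOn_const.mul
      (continuousOn_finsetSum _ fun j _ => (hg j).mul (hg j))).sub hF))).add
    (continuousOn_const.mul (hu1.mul (hg i)))

/-- flux on the boundary -/
lemma flux {r : ℝ} (hr : 0 < r) (hp : 2 < p) (hbd : ∀ x : E n × E k, ‖x.1‖ = r → u x = 0)
    (hx : ‖x.1‖ = r) :
    ∑ i, Tf ψ u p c (Sum.inl i) x * x.1 i = ψ (r ^ 2) * rad u x ^ 2 / 2 := by
  obtain ⟨h1, h2⟩ := bdry_grad hr hbd x hx
  have hz : zad u x = 0 := Finset.sum_eq_zero fun i _ => by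
    rw [gr, h1, mul_zero]
  have hgz : gsqZ u x = 0 := Finset.sum_eq_zero fun i _ => by
    rw [gr, h1, mul_zero]
  have hgy : gsqY u x = rad u x ^ 2 / r ^ 2 := by
    have : ∀ i, gr u (Sum.inl i) x = x.1 i / r ^ 2 * rad u x := h2
    rw [gsqY, Finset.sum_congr rfl fun i _ => by rw [this i]]
    have e : ∀ i, x.1 i / r ^ 2 * rad u x * (x.1 i / r ^ 2 * rad u x) =
      x.1 i ^ 2 * (rad u x ^ 2 / r ^ 4) := fun i => by ring
    rw [Finset.sum_congr rfl fun i _ => e i, ← Finset.sum_mul, ← EuclideanSpace.real_norm_sq_eq, hx]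
    field_simp
  rw [Ty, gsq_eq, hz, hgz, hgy, hx, hbd x hx]
  simp only [abs_zero, Real.zero_rpow (by linarith : p ≠ 0)]
  field_simp
  ring

end field

lemma S_bound {P r w Z gY gZ F c v b M h : ℝ} (hP0 : 0 ≤ P) (hP1 : P ≤ 1) (hY : 0 ≤ gY)
    (hZ0 : 0 ≤ gZ) (hF : 0 ≤ F) (hc : 0 ≤ c) (hr : r ^ 2 ≤ b ^ 2 * gY) (hw : w ^ 2 ≤ Z * gZ)
    (hZ : 1 ≤ Z) (hh : 0 ≤ h) (hM : h * Z ≤ M) :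
    |h * ((P * r + w) * w - Z * (1 / 2 * (gY + gZ) - F) + c * (v * w))| ≤
      M * (((b ^ 2 + 1) / 2 + 1 + 1 / 2 + c / 2) * (gY + gZ) + F + c / 2 * (v * v)) := by
  set B := ((b ^ 2 + 1) / 2 + 1 + 1 / 2 + c / 2) * (gY + gZ) + F + c / 2 * (v * v) with hB
  have hv := mul_self_nonneg v
  have hB0 : 0 ≤ B := by rw [hB]; positivity
  have h1 : |P * r * w| ≤ Z * ((b ^ 2 + 1) / 2 * (gY + gZ)) := by
    have e1 : |P * r * w| ≤ (r ^ 2 + w ^ 2) / 2 := by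
      rw [abs_mul, abs_mul, abs_of_nonneg hP0]
      have : P * |r| ≤ |r| := mul_le_of_le_one_left (abs_nonneg _) hP1
      have h2 : P * |r| * |w| ≤ |r| * |w| := mul_le_mul_of_nonneg_right this (abs_nonneg _)
      nlinarith [sq_nonneg (|r| - |w|), sq_abs r, sq_abs w]
    have e2 : r ^ 2 ≤ Z * (b ^ 2 * (gY + gZ)) := by
      have : b ^ 2 * gY ≤ b ^ 2 * (gY + gZ) := by gcongr; linarith
      have h3 : 0 ≤ b ^ 2 * (gY + gZ) := by positivity
      nlinarith
    have e3 : w ^ 2 ≤ Z * (gY + gZ) := by nlinarith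
    nlinarith
  have e3 : w ^ 2 ≤ Z * (gY + gZ) := by nlinarith
  have h2 : |c * (v * w)| ≤ Z * (c / 2 * (v * v) + c / 2 * (gY + gZ)) := by
    rw [abs_mul, abs_of_nonneg hc]
    have : |v * w| ≤ (v * v + w ^ 2) / 2 := by
      rw [abs_mul]; nlinarith [sq_nonneg (|v| - |w|), abs_mul_abs_self v, sq_abs w]
    have h3 : v * v ≤ Z * (v * v) := by nlinarith [mul_self_nonneg v]
    have h4 : |v * w| ≤ Z * (v * v + (gY + gZ)) / 2 := by nlinarith
    calc c * |v * w| ≤ c * (Z * (v * v + (gY + gZ)) / 2) := mul_le_mul_of_nonneg_left h4 hc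
      _ = _ := by ring
  have h3 : |Z * (1 / 2 * (gY + gZ) - F)| ≤ Z * (1 / 2 * (gY + gZ) + F) := by
    rw [abs_mul, abs_of_nonneg (by linarith : 0 ≤ Z)]
    refine mul_le_mul_of_nonneg_left ?_ (by linarith)
    rw [abs_le]; constructor <;> nlinarith
  have hS : |(P * r + w) * w - Z * (1 / 2 * (gY + gZ) - F) + c * (v * w)| ≤ Z * B := by
    have e : (P * r + w) * w - Z * (1 / 2 * (gY + gZ) - F) + c * (v * w) =
      P * r * w + w ^ 2 - Z * (1 / 2 * (gY + gZ) - F) + c * (v * w) := by ring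
    have e' : Z * B = Z * ((b ^ 2 + 1) / 2 * (gY + gZ)) + Z * (gY + gZ) +
        Z * (1 / 2 * (gY + gZ) + F) + Z * (c / 2 * (v * v) + c / 2 * (gY + gZ)) := by
      rw [hB]; ring
    rw [e, e']
    have hw0 := sq_nonneg w
    have t1 := abs_le.1 h1
    have t2 := abs_le.1 h2
    have t3 := abs_le.1 h3
    exact abs_le.2 ⟨by linarith [t1.1, t2.1, t3.2], by linarith [t1.2, t2.2, t3.1]⟩
  rw [abs_mul, abs_of_nonneg hh]
  calc h * |_| ≤ h * (Z * B) := mul_le_mul_of_nonneg_left hS hh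
    _ = h * Z * B := by ring
    _ ≤ M * B := mul_le_mul_of_nonneg_right hM hB0

lemma D_bound {n P P' s r gY gZ κ : ℝ} (hn : 1 ≤ n) (hP0 : 0 ≤ P) (hP' : 0 ≤ P')
    (hs : n * P + 2 * s * P' = 1) (hY : 0 ≤ gY) (hZ0 : 0 ≤ gZ) (hκ : 0 ≤ κ)
    (hr : r ^ 2 ≤ s * gY) :
    2 * P' * r ^ 2 + P * gY + gZ - (κ + 1) * (gY + gZ) ≤ -((n - 1) * P * gY) ∧
    |2 * P' * r ^ 2 + P * gY + gZ - (κ + 1) * (gY + gZ)| ≤ (κ + 1) * (gY + gZ) := by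
  have h1 : 2 * P' * r ^ 2 ≤ (1 - n * P) * gY := by
    have : 2 * P' * r ^ 2 ≤ 2 * P' * (s * gY) := by gcongr
    calc _ ≤ _ := this
      _ = 2 * s * P' * gY := by ring
      _ = (1 - n * P) * gY := by rw [← hs]; ring
  have h2 : 0 ≤ κ * (gY + gZ) := by positivity
  have h3 : 0 ≤ (n - 1) * P * gY := by
    have : 0 ≤ n - 1 := by linarith
    positivity
  have h4 : 0 ≤ 2 * P' * r ^ 2 := by positivity
  have h5 : 0 ≤ P * gY := by positivity
  have h6 : 2 * P' * r ^ 2 + P * gY + gZ - (κ + 1) * (gY + gZ) ≤ -((n - 1) * P * gY) := by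
    nlinarith
  refine ⟨h6, ?_⟩
  rw [abs_le]
  constructor <;> nlinarith

lemma core {n k : ℕ} {a b p κ : ℝ} {u : E n × E k → ℝ} (hn : 2 ≤ n) (ha : 0 < a) (hab : a < b)
    (hp : 2 < p) (hκ : 0 ≤ κ) (hκe : κ = ((k : ℝ) + 1) / 2 - 1 - ((k : ℝ) + 1) / p)
    (hu2 : ContDiffOn ℝ 2 u (Sh n k a b)) (hu1 : ContinuousOn u (Cl n k a b))
    (hu1' : ContinuousOn (fderiv ℝ u) (Cl n k a b))
    (hlap : ∀ x ∈ Sh n k a b, ∑ i, gr (gr u i) i x = -(|u x| ^ (p - 2) * u x))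
    (hbd : ∀ x : E n × E k, ‖x.1‖ = a ∨ ‖x.1‖ = b → u x = 0)
    (hint1 : IntegrableOn (gsq u) (Sh n k a b))
    (hint2 : IntegrableOn (fun x => |u x| ^ p) (Sh n k a b)) :
    ∀ x ∈ Sh n k a b, gsqY u x = 0 := by
  have hb : 0 < b := ha.trans hab
  have hSm : MeasurableSet (Sh n k a b) := isOpen_Sh.measurableSet
  have hL2 := poincare hn ha hab hu2 hu1 hu1' hbd hint1
  obtain ⟨η, h, M, hM, hη⟩ := exists_eta n k
  obtain ⟨ψ, ψ', q1, q2, q3, q4, q5, q6, q7⟩ := exists_psi (n := n) (by omega) ha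
  have hnR : (2:ℝ) ≤ n := by exact_mod_cast hn
  set c : ℝ := ((k : ℝ) + 1) / p with hc
  have hp0 : 0 < p := by linarith
  have hc0 : 0 ≤ c := by positivity
  have hs0 : ∀ x ∈ Sh n k a b, 0 < ‖x.1‖ ^ 2 := fun x hx => pow_pos (ha.trans hx.1) 2
  have hsa : ∀ x ∈ Sh n k a b, a ^ 2 < ‖x.1‖ ^ 2 := fun x hx =>
    pow_lt_pow_left₀ hx.1 ha.le (by norm_num)
  set D0 : E n × E k → ℝ := fun x => 2 * ψ' (‖x.1‖ ^ 2) * rad u x ^ 2 + ψ (‖x.1‖ ^ 2) * gsqY u x +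
    gsqZ u x - (κ + 1) * (gsqY u x + gsqZ u x) with hD0
  have hDb : ∀ x ∈ Sh n k a b, D0 x ≤ -(((n:ℝ) - 1) * ψ (‖x.1‖ ^ 2) * gsqY u x) ∧
      |D0 x| ≤ (κ + 1) * (gsqY u x + gsqZ u x) := fun x hx =>
    D_bound (by linarith) (q6 _ (hsa x hx)).le (q7 _ (hs0 x hx)) (q4 _ (hs0 x hx)) gsqY_nonneg
      gsqZ_nonneg hκ rad_sq_le
  set S : E n × E k → ℝ := fun x => ∑ i, x.2 i * Tf ψ u p c (Sum.inr i) x with hS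
  set DR : ℝ → E n × E k → ℝ := fun R x => η R x * D0 x - h R x * S x with hDR
  set Bd : E n × E k → ℝ := fun x => (κ + 1) * gsq u x +
    M * (((b ^ 2 + 1) / 2 + 1 + 1 / 2 + c / 2) * gsq u x + |u x| ^ p / p + c / 2 * (u x * u x))
    with hBd
  have hBdi : IntegrableOn Bd (Sh n k a b) :=
    (hint1.const_mul _).add ((((hint1.const_mul _).add (hint2.div_const p)).add
      (hL2.const_mul _)).const_mul M)
  have hDRb : ∀ R : ℝ, 1 ≤ R → ∀ x ∈ Sh n k a b, |DR R x| ≤ Bd x := by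
    intro R hR x hx
    obtain ⟨e1, e2, e3, e4, e5, e6, e7, e8, e9⟩ := hη R (by linarith)
    have hψ0 := (q6 _ (hsa x hx)).le
    have hψ1 : ψ (‖x.1‖ ^ 2) ≤ 1 := by
      have := q4 _ (hs0 x hx)
      have h2 : 0 ≤ 2 * ‖x.1‖ ^ 2 * ψ' (‖x.1‖ ^ 2) :=
        mul_nonneg (by positivity) (q7 _ (hs0 x hx))
      nlinarith
    have h1 : |η R x * D0 x| ≤ (κ + 1) * gsq u x := by
      rw [abs_mul, abs_of_nonneg (e3 x), gsq_eq]
      exact (mul_le_of_le_one_left (abs_nonneg _) (e4 x)).trans (hDb x hx).2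
    have h2 : |h R x * S x| ≤ M * (((b ^ 2 + 1) / 2 + 1 + 1 / 2 + c / 2) * gsq u x +
        |u x| ^ p / p + c / 2 * (u x * u x)) := by
      have hgY := gsqY_nonneg (u := u) (x := x)
      have hgZ := gsqZ_nonneg (u := u) (x := x)
      have hF : 0 ≤ |u x| ^ p / p := by positivity
      rcases le_total ‖x.2‖ R with hz | hz
      · rw [(e5 x hz).2, zero_mul, abs_zero, gsq_eq]
        have := mul_self_nonneg (u x)
        positivity
      · simp only [hS]
        rw [Tz, gsq_eq]
        refine S_bound hψ0 hψ1 hgY hgZ hF hc0 ?_ zad_sq_le ?_ (e8 x) (e9 x)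
        · refine rad_sq_le.trans ?_
          have : ‖x.1‖ ≤ b := hx.2.le
          gcongr
        · exact one_le_pow₀ (hR.trans hz)
    simp only [hDR]
    calc |η R x * D0 x - h R x * S x| ≤ |η R x * D0 x| + |h R x * S x| := abs_sub _ _
      _ ≤ Bd x := add_le_add h1 h2
  have hcψ : ContinuousOn (fun x : E n × E k => ψ (‖x.1‖ ^ 2)) (Sh n k a b) :=
    q2.continuousOn.comp (continuous_fst.norm.pow 2).continuousOn fun x hx => hs0 x hx
  have hcψ' : ContinuousOn (fun x : E n × E k => ψ' (‖x.1‖ ^ 2)) (Sh n k a b) :=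
    q3.comp (continuous_fst.norm.pow 2).continuousOn fun x hx => hs0 x hx
  have hcZ : ContinuousOn (gsqZ u) (Cl n k a b) :=
    continuousOn_finsetSum _ fun i _ => (cont_gr hu1' _).mul (cont_gr hu1' _)
  have hcY := cont_gsqY hu1'
  have hD0c : ContinuousOn D0 (Sh n k a b) :=
    ((((continuousOn_const.mul hcψ').mul (((cont_rad hu1').mono Sh_sub_Cl).pow 2)).add
      (hcψ.mul (hcY.mono Sh_sub_Cl))).add (hcZ.mono Sh_sub_Cl)).sub
      (continuousOn_const.mul ((hcY.mono Sh_sub_Cl).add (hcZ.mono Sh_sub_Cl)))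
  have hTc : ∀ i, ContinuousOn (Tf ψ u p c i) (Cl n k a b) := fun i => Tf_cont ha hp hu1 hu1' q2 i
  have hSc : ContinuousOn S (Sh n k a b) := by
    refine continuousOn_finsetSum _ fun i _ => ?_
    exact (cont_co (Sum.inr i) _).mul ((hTc _).mono Sh_sub_Cl)
  have hDRm : ∀ R : ℝ, 1 ≤ R → AEStronglyMeasurable (DR R) (volume.restrict (Sh n k a b)) := by
    intro R hR
    obtain ⟨e1, e2, e3, e4, e5, e6, e7, e8, e9⟩ := hη R (by linarith)
    exact ((e1.continuous.continuousOn.mul hD0c).sub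
      (e2.continuousOn.mul hSc)).aestronglyMeasurable hSm
  have hDRi : ∀ R : ℝ, 1 ≤ R → IntegrableOn (DR R) (Sh n k a b) := by
    intro R hR
    refine Integrable.mono' hBdi (hDRm R hR) ?_
    exact (ae_restrict_iff' hSm).2 (Eventually.of_forall fun x hx => hDRb R hR x hx)
  have key : ∀ R : ℝ, 1 ≤ R → 0 ≤ ∫ x in Sh n k a b, DR R x := by
    intro R hR
    obtain ⟨e1, e2, e3, e4, e5, e6, e7, e8, e9⟩ := hη R (by linarith)
    have hq : ∀ x : E n × E k, ∑ i, η R x * Tf ψ u p c (Sum.inl i) x * x.1 i =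
        η R x * ∑ i, Tf ψ u p c (Sum.inl i) x * x.1 i := fun x => by
      rw [Finset.mul_sum]; exact Finset.sum_congr rfl fun i _ => by ring
    refine div_nonneg' (R := 2 * R) ha hab (fun i x => η R x * Tf ψ u p c i x) ?_ ?_ ?_ ?_ ?_
      (DR R) ?_ (hDRi R hR)
    · exact fun i => e1.contDiffOn.mul (Tf_C1 ha hp hu2 q2 i)
    · exact fun i => e1.continuous.continuousOn.mul (hTc i)
    · intro i x hx
      simp [e6 x hx]
    · intro x hx
      rw [hq, flux hb hp (fun x hx => hbd x (Or.inr hx)) hx]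
      have := q6 (b ^ 2) (pow_lt_pow_left₀ hab ha.le (by norm_num))
      have := e3 x
      positivity
    · intro x hx
      rw [hq, flux ha hp (fun x hx => hbd x (Or.inl hx)) hx, q5]
      simp
    · intro x hx
      have hψ := q1 _ (hs0 x hx)
      have hi : ∀ i, fderiv ℝ (fun x => η R x * Tf ψ u p c i x) x (bas i) =
          Sum.elim (fun _ => 0) (fun j => -(h R x * x.2 j)) i * Tf ψ u p c i x +
            η R x * fderiv ℝ (Tf ψ u p c i) x (bas i) := by
        intro i
        have hT := HP_Tf (c := c) hp hu2 hx hψ i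
        rw [hT.eq i]
        exact ((e7 x).mul hT).eq i
      rw [Finset.sum_congr rfl fun i _ => hi i, Finset.sum_add_distrib, ← Finset.mul_sum,
        div_Tf hp hu2 hx hψ (hlap x hx), Fintype.sum_sum_type]
      simp only [Sum.elim_inl, Sum.elim_inr, zero_mul, Finset.sum_const_zero, zero_add]
      have e : ∑ j, -(h R x * x.2 j) * Tf ψ u p c (Sum.inr j) x = -(h R x * S x) := by
        simp only [hS]
        rw [Finset.mul_sum, ← Finset.sum_neg_distrib]
        exact Finset.sum_congr rfl fun i _ => by ring
      rw [e, q4 _ (hs0 x hx), gsq_eq]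
      simp only [hDR, hD0]
      have e' : c * |u x| ^ p = ((1:ℝ) + k) * (|u x| ^ p / p) := by
        rw [hc]; ring
      rw [mul_sub c, e', hκe]
      ring
  have hlim : Tendsto (fun j : ℕ => ∫ x in Sh n k a b, DR ((j : ℝ) + 1) x) atTop
      (𝓝 (∫ x in Sh n k a b, D0 x)) := by
    have h1 : ∀ j : ℕ, (1:ℝ) ≤ (j : ℝ) + 1 := fun j => by
      have : (0:ℝ) ≤ j := Nat.cast_nonneg j
      linarith
    refine tendsto_integral_of_dominated_convergence Bd (fun j => hDRm _ (h1 j)) hBdi (fun j => ?_) ?_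
    · exact (ae_restrict_iff' hSm).2 (Eventually.of_forall fun x hx => hDRb _ (h1 j) x hx)
    · refine Eventually.of_forall fun x => ?_
      refine tendsto_const_nhds.congr' ?_
      filter_upwards [eventually_ge_atTop ⌈‖x.2‖⌉₊] with j hj
      have hj' := Nat.le_of_ceil_le hj
      obtain ⟨e1, e2, e3, e4, e5, e6, e7, e8, e9⟩ := hη ((j : ℝ) + 1) (by linarith [h1 j])
      have := e5 x (by linarith)
      simp only [hDR]
      rw [this.1, this.2]; ring
  have hge : 0 ≤ ∫ x in Sh n k a b, D0 x := by
    refine ge_of_tendsto hlim (Eventually.of_forall fun j => key _ ?_)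
    have : (0:ℝ) ≤ j := Nat.cast_nonneg j
    linarith
  have hle0 : ∀ x ∈ Sh n k a b, D0 x ≤ 0 := fun x hx => by
    refine (hDb x hx).1.trans ?_
    have h1 := (q6 _ (hsa x hx)).le
    have h2 := gsqY_nonneg (u := u) (x := x)
    have h3 : 0 ≤ (n:ℝ) - 1 := by linarith
    have : 0 ≤ ((n:ℝ) - 1) * ψ (‖x.1‖ ^ 2) * gsqY u x := by positivity
    linarith
  have hD0i : IntegrableOn D0 (Sh n k a b) := by
    refine Integrable.mono' (hint1.const_mul (κ + 1)) (hD0c.aestronglyMeasurable hSm) ?_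
    refine (ae_restrict_iff' hSm).2 (Eventually.of_forall fun x hx => ?_)
    rw [gsq_eq]
    exact (hDb x hx).2
  have hnn : 0 ≤ᵐ[volume.restrict (Sh n k a b)] fun x => -D0 x :=
    (ae_restrict_iff' hSm).2 (Eventually.of_forall fun x hx => neg_nonneg.2 (hle0 x hx))
  have hint0 : ∫ x in Sh n k a b, -D0 x = 0 := by
    refine le_antisymm ?_ (integral_nonneg_of_ae hnn)
    rw [integral_neg]; linarith
  have hae := (integral_eq_zero_iff_of_nonneg_ae hnn hD0i.neg).1 hint0
  have : Measure.IsAddHaarMeasure (volume : Measure (E n × E k)) :=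
    Measure.prod.instIsAddHaarMeasure volume volume
  have hz : EqOn (fun x => -D0 x) 0 (Sh n k a b) :=
    Measure.eqOn_open_of_ae_eq hae isOpen_Sh hD0c.neg continuousOn_const
  intro x hx
  have h0 : -D0 x = 0 := hz hx
  have h1 := (hDb x hx).1
  have h2 : 0 < ((n:ℝ) - 1) * ψ (‖x.1‖ ^ 2) := mul_pos (by linarith) (q6 _ (hsa x hx))
  have h3 := gsqY_nonneg (u := u) (x := x)
  by_contra hne
  have h4 : 0 < gsqY u x := lt_of_le_of_ne h3 (Ne.symm hne)
  have := mul_pos h2 h4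
  linarith

/-- points of the closed shell are limits of points of the open one -/
lemma Cl_sub_closure {n k : ℕ} {a b : ℝ} (ha : 0 < a) (hab : a < b) :
    Cl n k a b ⊆ closure (Sh n k a b) := by
  intro x hx
  have hx0 : 0 < ‖x.1‖ := ha.trans_le hx.1
  have hc : Continuous fun r : ℝ => (((r / ‖x.1‖) • x.1, x.2) : E n × E k) := by fun_prop
  have hmem : ‖x.1‖ ∈ closure (Ioo a b) := by
    rw [closure_Ioo hab.ne]; exact hx
  have := map_mem_closure hc hmem (t := Sh n k a b) (fun r hr => by
    have hr0 : 0 < r := ha.trans hr.1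
    have : ‖(r / ‖x.1‖) • x.1‖ = r := by
      rw [norm_smul, Real.norm_of_nonneg (by positivity)]; field_simp
    change a < ‖(r / ‖x.1‖) • x.1‖ ∧ ‖(r / ‖x.1‖) • x.1‖ < b
    rw [this]; exact hr)
  rwa [div_self hx0.ne', one_smul] at this

lemma frontier_mem {n k : ℕ} {a b : ℝ} (ha : 0 < a) (hab : a < b) {x : E n × E k}
    (hx : ‖x.1‖ = a ∨ ‖x.1‖ = b) : x ∈ frontier (Sh n k a b) := by
  rw [isOpen_Sh.frontier_eq]
  refine ⟨Cl_sub_closure ha hab ?_, ?_⟩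
  · rcases hx with h | h
    · exact ⟨h.ge, h.le.trans hab.le⟩
    · exact ⟨hab.le.trans h.ge, h.le⟩
  · rintro ⟨h1, h2⟩
    rcases hx with h | h <;> linarith

lemma fin_zero {n k : ℕ} {a b : ℝ} {u : E n × E k → ℝ} (ha : 0 < a)
    (hu2 : ContDiffOn ℝ 2 u (Sh n k a b)) (hu1 : ContinuousOn u (Cl n k a b))
    (hbd : ∀ x : E n × E k, ‖x.1‖ = a ∨ ‖x.1‖ = b → u x = 0)
    (hY : ∀ x ∈ Sh n k a b, gsqY u x = 0) :
    ∀ x ∈ Sh n k a b, u x = 0 := by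
  intro x hx
  have hx0 : 0 < ‖x.1‖ := ha.trans hx.1
  set γ : ℝ → E n × E k := fun r => ((r / ‖x.1‖) • x.1, x.2) with hγ
  have hn : ∀ r, 0 < r → ‖(γ r).1‖ = r := by
    intro r hr
    change ‖(r / ‖x.1‖) • x.1‖ = r
    rw [norm_smul, Real.norm_of_nonneg (by positivity)]; field_simp
  have hγc : Continuous γ := by fun_prop
  have hgr : ∀ y ∈ Sh n k a b, ∀ v : E n, fderiv ℝ u y (v, 0) = 0 := by
    intro y hy v
    have h1 : ∀ i, gr u (Sum.inl i) y = 0 := by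
      intro i
      have := (Finset.sum_eq_zero_iff_of_nonneg (fun i _ => mul_self_nonneg _)).1 (hY y hy) i
        (Finset.mem_univ _)
      exact mul_self_eq_zero.1 this
    have h2 : (fderiv ℝ u y).comp (ContinuousLinearMap.inl ℝ (E n) (E k)) = 0 := by
      apply ContinuousLinearMap.coe_injective
      refine (EuclideanSpace.basisFun (Fin n) ℝ).toBasis.ext fun i => ?_
      have := h1 i
      simpa [gr, bas] using this
    have := congrArg (fun L => L v) h2
    simpa using this
  have hd : ∀ r ∈ Ioo a ‖x.1‖, HasDerivAt (fun r => u (γ r)) 0 r := by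
    intro r hr
    have hr0 : 0 < r := ha.trans hr.1
    have hm : γ r ∈ Sh n k a b := by
      change a < ‖(γ r).1‖ ∧ ‖(γ r).1‖ < b
      rw [hn r hr0]; exact ⟨hr.1, hr.2.trans hx.2⟩
    have hγd : HasDerivAt γ ((1 / ‖x.1‖) • x.1, 0) r := by
      have h1 : HasDerivAt (fun r : ℝ => (r / ‖x.1‖) • x.1) ((1 / ‖x.1‖) • x.1) r :=
        ((hasDerivAt_id r).div_const _).smul_const _
      exact h1.prodMk (hasDerivAt_const r x.2)
    have := (HP_u hu2 hm).diff.hasFDerivAt.comp_hasDerivAt r hγd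
    rw [hgr _ hm] at this
    exact this
  have hc : ContinuousOn (fun r => u (γ r)) (Icc a ‖x.1‖) := by
    refine hu1.comp hγc.continuousOn fun r hr => ?_
    change a ≤ ‖(γ r).1‖ ∧ ‖(γ r).1‖ ≤ b
    rw [hn r (ha.trans_le hr.1)]; exact ⟨hr.1, hr.2.trans hx.2.le⟩
  obtain ⟨r, hr, h⟩ := exists_hasDerivAt_eq_slope (fun r => u (γ r)) (fun _ => 0) hx.1 hc hd
  have h0 : u (γ a) = 0 := hbd _ (Or.inl (hn a ha))
  have h1 : γ ‖x.1‖ = x := by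
    simp only [hγ]
    rw [div_self hx0.ne', one_smul]
  have hpos : 0 < ‖x.1‖ - a := sub_pos.2 hx.1
  rw [eq_div_iff hpos.ne', h0, h1] at h
  linarith

end Poh

/-- Theorem 1: if `1 ≤ m < N-2` and `p ≥ 2(N-m)/(N-m-2)`, problem (1.2) has no
nontrivial solution `u ∈ C²(Ω) ∩ C¹(Ω̄)`. -/
theorem no_nontrivial_solution_supercritical
    (N m : ℕ) (hN : 2 ≤ N) (hm : 1 ≤ m) (hmN : m + 2 < N)
    (a b : ℝ) (ha : 0 < a) (hab : a < b)
    (p : ℝ) (hp : 2 * ((N : ℝ) - m) / ((N : ℝ) - m - 2) ≤ p)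
    (u : E (m + 1) × E (N - m - 1) → ℝ)
    (hu2 : ContDiffOn ℝ 2 u (Omega N m a b))
    (hu1 : ContinuousOn u (closure (Omega N m a b)))
    (hu1' : ContinuousOn (fderiv ℝ u) (closure (Omega N m a b)))
    (heq : ∀ x ∈ Omega N m a b, - lap N m u x = |u x| ^ (p - 2) * u x)
    (hbd : ∀ x ∈ frontier (Omega N m a b), u x = 0)
    (hint1 : IntegrableOn (gradSq N m u) (Omega N m a b))
    (hint2 : IntegrableOn (fun x => |u x| ^ p) (Omega N m a b)) :
    ∀ x ∈ Omega N m a b, u x = 0 := by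
  have hcl : closure (Omega N m a b) ⊇ Poh.Cl (m + 1) (N - m - 1) a b :=
    Poh.Cl_sub_closure ha hab
  have hk : ((N - m - 1 : ℕ) : ℝ) = (N : ℝ) - m - 1 := by
    rw [Nat.cast_sub (by omega), Nat.cast_sub (by omega), Nat.cast_one]
  have hd : (0:ℝ) < (N : ℝ) - m - 2 := by
    have : ((m + 2 : ℕ) : ℝ) < N := by exact_mod_cast hmN
    push_cast at this
    linarith
  have hp' : 2 * ((N : ℝ) - m) ≤ p * ((N : ℝ) - m - 2) := (div_le_iff₀ hd).1 hp
  have hp2 : 2 < p := by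
    by_contra! hc
    nlinarith
  have hbd' : ∀ x : E (m + 1) × E (N - m - 1), ‖x.1‖ = a ∨ ‖x.1‖ = b → u x = 0 := fun x hx =>
    hbd x (Poh.frontier_mem ha hab hx)
  have hY := Poh.core (n := m + 1) (k := N - m - 1)
    (κ := (((N - m - 1 : ℕ) : ℝ) + 1) / 2 - 1 - (((N - m - 1 : ℕ) : ℝ) + 1) / p)
    (by omega) ha hab hp2 ?_ rfl hu2 (hu1.mono hcl) (hu1'.mono hcl) ?_ hbd' ?_ hint2
  · exact Poh.fin_zero ha hu2 (hu1.mono hcl) hbd' hY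
  · rw [hk]
    have hp0 : 0 < p := by linarith
    have : ((N : ℝ) - m - 1 + 1) / p ≤ ((N : ℝ) - m - 1 + 1) / 2 - 1 := by
      rw [div_le_iff₀ hp0]; linarith
    linarith
  · intro x hx
    have h1 := heq x hx
    rw [← h1, neg_neg, Fintype.sum_sum_type]
    rfl
  · refine hint1.congr (Filter.Eventually.of_forall fun x => ?_)
    simp only [gradSq, Poh.gsq, Fintype.sum_sum_type, sq]
    rfl
end
end

section
/- Let N ≥ 2 and 1 ≤ m ≤ N-1 be integers and 0 < a < b. For every x = (y,z) ∈ ℝ^{m+1} × ℝ^{N-m-1} with a < |y| and every ξ ∈ ℝ^N with ξ ≠ 0, the derivative of χ at x satisfies 0 < ⟨Dχ(x)[ξ], ξ⟩ ≤ |ξ|². -/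
open scoped RealInnerProductSpace

noncomputable section

/-- `φ(t) = (1/(m+1))·[1 - (a/t)^{m+1}]`. -/
def phi (m : ℕ) (a : ℝ) (t : ℝ) : ℝ :=
  (1 / ((m : ℝ) + 1)) * (1 - (a / t) ^ (m + 1))

/-- The vector field `χ(y,z) = (φ(|y|)·y, z)` on `ℝ^{m+1} × ℝ^{N-m-1}`. -/
def chi (N m : ℕ) (a : ℝ) (x : E (m + 1) × E (N - m - 1)) : E (m + 1) × E (N - m - 1) :=
  (phi m a ‖x.1‖ • x.1, x.2)

theorem phi_hasDerivAt (m : ℕ) (a t : ℝ) (ht : 0 < t) :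
    HasDerivAt (phi m a) ((a / t) ^ (m + 1) / t) t := by
  have h1 : HasDerivAt (fun t : ℝ => a / t) (-a / t ^ 2) t := by
    have := (hasDerivAt_inv ht.ne').const_mul a
    simp only [div_eq_mul_inv]
    refine HasDerivAt.congr_deriv this ?_
    ring
  have h2 := ((h1.pow (m + 1)).const_sub 1).const_mul (1 / ((m : ℝ) + 1))
  have h3 : ((m : ℝ) + 1) ≠ 0 := by positivity
  refine HasDerivAt.congr_deriv h2 ?_
  simp only [Nat.add_sub_cancel]
  push_cast
  rw [pow_succ (a / t) m]
  field_simp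

theorem chi_fderiv (N m : ℕ) (a : ℝ) (x ξ : E (m + 1) × E (N - m - 1)) (hx : 0 < ‖x.1‖) :
    fderiv ℝ (chi N m a) x ξ =
      (phi m a ‖x.1‖ • ξ.1
        + ((a / ‖x.1‖) ^ (m + 1) / ‖x.1‖ * (⟪x.1, ξ.1⟫ / ‖x.1‖)) • x.1, ξ.2) := by
  have hf : HasFDerivAt (fun x : E (m + 1) × E (N - m - 1) => x.1)
      (ContinuousLinearMap.fst ℝ (E (m + 1)) (E (N - m - 1))) x := hasFDerivAt_fst
  have hn := hf.norm_sq.sqrt (by positivity)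
  simp only [Real.sqrt_sq (norm_nonneg _)] at hn
  have hp := (phi_hasDerivAt m a ‖x.1‖ hx).comp_hasFDerivAt x hn
  have hc := (hp.smul hf).prodMk (hasFDerivAt_snd (𝕜 := ℝ) (p := x))
  have hc' : HasFDerivAt (chi N m a) _ x := hc
  rw [hc'.fderiv]
  ext i
  · simp
    left; field_simp; simp
  · simp

/-- For `a < |y|` and `ξ ≠ 0`, the quadratic form of `Dχ(x)` satisfies
`0 < ⟨Dχ(x)[ξ], ξ⟩ ≤ |ξ|²` (the Euclidean inner product and norm of
`ℝ^{m+1} × ℝ^{N-m-1}` are written in components). -/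
theorem chi_quadratic_form (N m : ℕ) (hN : 2 ≤ N) (hm : 1 ≤ m) (hmN : m ≤ N - 1)
    (a b : ℝ) (ha : 0 < a) (hab : a < b) :
    ∀ x : E (m + 1) × E (N - m - 1), a < ‖x.1‖ →
      ∀ ξ : E (m + 1) × E (N - m - 1), ξ ≠ 0 →
        0 < ⟪(fderiv ℝ (chi N m a) x ξ).1, ξ.1⟫ + ⟪(fderiv ℝ (chi N m a) x ξ).2, ξ.2⟫ ∧
        ⟪(fderiv ℝ (chi N m a) x ξ).1, ξ.1⟫ + ⟪(fderiv ℝ (chi N m a) x ξ).2, ξ.2⟫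
          ≤ ‖ξ.1‖ ^ 2 + ‖ξ.2‖ ^ 2 := by
  intro x hx ξ hξ
  have ht : 0 < ‖x.1‖ := ha.trans hx
  rw [chi_fderiv N m a x ξ ht]
  simp only [inner_add_left, real_inner_smul_left, real_inner_self_eq_norm_sq]
  have hs0 : 0 < (a / ‖x.1‖) ^ (m + 1) := by positivity
  have hs1 : (a / ‖x.1‖) ^ (m + 1) < 1 :=
    pow_lt_one₀ (by positivity) ((div_lt_one ht).2 hx) (by omega)
  have hcs : (⟪x.1, ξ.1⟫ / ‖x.1‖) ^ 2 ≤ ‖ξ.1‖ ^ 2 := by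
    rw [div_pow, div_le_iff₀ (by positivity), ← mul_pow, mul_comm, ← sq_abs ⟪x.1, ξ.1⟫]
    exact pow_le_pow_left₀ (abs_nonneg _) (abs_real_inner_le_norm _ _) 2
  have hq : (a / ‖x.1‖) ^ (m + 1) / ‖x.1‖ * (⟪x.1, ξ.1⟫ / ‖x.1‖) * ⟪x.1, ξ.1⟫
      = (a / ‖x.1‖) ^ (m + 1) * (⟪x.1, ξ.1⟫ / ‖x.1‖) ^ 2 := by ring
  rw [hq]
  unfold phi
  generalize (a / ‖x.1‖) ^ (m + 1) = s at *
  generalize ⟪x.1, ξ.1⟫ / ‖x.1‖ = c at *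
  have hk0 : 0 < 1 / ((m : ℝ) + 1) := by positivity
  have hk1 : 1 / ((m : ℝ) + 1) ≤ 1 := by
    rw [div_le_one (by positivity)]
    linarith [(Nat.cast_nonneg m : (0 : ℝ) ≤ m)]
  generalize 1 / ((m : ℝ) + 1) = k at *
  have hks : 0 < k * (1 - s) := mul_pos hk0 (by linarith)
  have hks1 : k * (1 - s) ≤ 1 - s := by nlinarith
  have hsc : 0 ≤ s * c ^ 2 := by positivity
  constructor
  · by_cases h1 : ξ.1 = 0
    · have h2 : ξ.2 ≠ 0 := fun h2 => hξ (Prod.ext h1 h2)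
      have h3 : 0 < ‖ξ.2‖ ^ 2 := pow_pos (norm_pos_iff.2 h2) 2
      have h4 : 0 ≤ k * (1 - s) * ‖ξ.1‖ ^ 2 := by positivity
      linarith
    · have h3 : 0 < ‖ξ.1‖ ^ 2 := pow_pos (norm_pos_iff.2 h1) 2
      have h4 : 0 < k * (1 - s) * ‖ξ.1‖ ^ 2 := mul_pos hks h3
      have h5 : 0 ≤ ‖ξ.2‖ ^ 2 := by positivity
      linarith
  · have h1 := mul_le_mul_of_nonneg_left hcs hs0.le
    have h2 := mul_le_mul_of_nonneg_right hks1 (sq_nonneg ‖ξ.1‖)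
    linarith
end
end
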